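/- arXiv:1303.6469 — 2 statements merged into one kernel-verified Lean document; each statement's English description precedes it below -/
import Mathlib

section
/- Let x₀ ∈ X, let x : [0,∞) → X be locally absolutely continuous with x(0) = x₀, and let (ν_t)_{t≥0} be a family of Borel probability measures on U, measurable in t, such that ẋ(t) = ∫_U f(x(t), u) dν_t(u) for almost every t ≥ 0. Define a measure μ on ℝⁿ × ℝᵐ by μ(A × B) := ∫_0^∞ e^{−βt} 1_A(x(t)) ν_t(B) dt. Then μ is a finite nonnegative Borel measure supported in X × U with total mass μ(X × U) = 1/β, and the pair (δ_{x₀}, μ) satisfies the continuous-time discounted Liouville equation. -/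
open MeasureTheory
open scoped ENNReal

/-- The (topological) support of a Borel measure. -/
def msupport {α : Type*} [TopologicalSpace α] [MeasurableSpace α] (μ : Measure α) : Set α :=
  {x | ∀ s : Set α, IsOpen s → x ∈ s → 0 < μ s}

/-- The continuous-time discounted Liouville equation for the pair `(μ₀, μ)`. -/
def LiouvilleC {n m : ℕ}
    (f : EuclideanSpace ℝ (Fin n) → EuclideanSpace ℝ (Fin m) → EuclideanSpace ℝ (Fin n))
    (β : ℝ) (μ₀ : Measure (EuclideanSpace ℝ (Fin n)))
    (μ : Measure (EuclideanSpace ℝ (Fin n) × EuclideanSpace ℝ (Fin m))) : Prop :=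
  ∀ v : EuclideanSpace ℝ (Fin n) → ℝ, ContDiff ℝ 1 v →
    β * ∫ p, v p.1 ∂μ = ∫ x, v x ∂μ₀ + ∫ p, fderiv ℝ v p.1 (f p.1 p.2) ∂μ

/-!
By disintegration, `μ` is the image of `e^{-βt} dt ⊗ ν_t` under `(t, u) ↦ (x t, u)`. The integral
of `∇v · f` against `ν_t` at `x t` is the derivative of `v (x t)` at almost every time, by the chain
rule and the equation of motion. Hence `e^{-βt} v (x t)` is locally absolutely continuous with
derivative `e^{-βt} (∫ ∇v (x t) · f (x t, u) dν_t(u) - β v (x t))`. This function and its derivative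
are integrable on `[0, ∞)`, so the function tends to `0` at infinity and its derivative integrates
to `-v (x 0)`: this is the Liouville equation.
-/

open Set Filter Topology ProbabilityTheory

lemma msupport_eq_support {α : Type*} [TopologicalSpace α] [MeasurableSpace α] (μ : Measure α) :
    msupport μ = μ.support := by
  rw [Measure.support_eq_forall_isOpen]
  ext x
  exact forall_congr' fun s => forall_comm

lemma msupport_subset_of_isClosed {α : Type*} [TopologicalSpace α] [MeasurableSpace α]
    {μ : Measure α} {s : Set α} (hs : IsClosed s) (h : ∀ᵐ u ∂μ, u ∈ s) : msupport μ ⊆ s := by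
  rw [msupport_eq_support]
  exact Measure.support_subset_of_isClosed hs h

lemma ae_mem_of_msupport_subset {α : Type*} [TopologicalSpace α] [HereditarilyLindelofSpace α]
    [MeasurableSpace α] {μ : Measure α} {s : Set α} (h : msupport μ ⊆ s) : ∀ᵐ u ∂μ, u ∈ s := by
  rw [msupport_eq_support] at h
  exact mem_of_superset Measure.support_mem_ae h

lemma integrable_of_continuous_of_ae_mem_isCompact {α G : Type*} [TopologicalSpace α]
    [MeasurableSpace α] [OpensMeasurableSpace α] [NormedAddCommGroup G]
    [SecondCountableTopology G] {μ : Measure α} [IsFiniteMeasure μ] {K : Set α} {g : α → G}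
    (hg : Continuous g) (hK : IsCompact K) (hμ : ∀ᵐ p ∂μ, p ∈ K) : Integrable g μ := by
  borelize G
  obtain ⟨C, hC⟩ := hK.exists_bound_of_continuousOn hg.continuousOn
  exact .of_bound hg.measurable.aestronglyMeasurable C (hμ.mono hC)

lemma integrable_continuousLinearMap_apply {α E G : Type*} [MeasurableSpace α]
    [NormedAddCommGroup E] [NormedSpace ℝ E] [NormedAddCommGroup G] [NormedSpace ℝ G]
    {μ : Measure α} {L : α → E →L[ℝ] G} {g : α → E} {C : ℝ} (hL : AEStronglyMeasurable L μ)
    (hC : ∀ᵐ p ∂μ, ‖L p‖ ≤ C) (hg : Integrable g μ) : Integrable (fun p => L p (g p)) μ := by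
  refine (hg.norm.const_mul C).mono'
    (isBoundedBilinearMap_apply.continuous.comp_aestronglyMeasurable (hL.prodMk hg.1)) ?_
  filter_upwards [hC] with p hp using (L p).le_of_opNorm_le hp (g p)

section AbsolutelyContinuous

lemma absolutelyContinuousOnInterval_of_dist_le {Y Z : Type*} [PseudoMetricSpace Y]
    [PseudoMetricSpace Z] {φ : ℝ → Y} {ψ : ℝ → Z} {K a b : ℝ}
    (hψ : AbsolutelyContinuousOnInterval ψ a b)
    (hle : ∀ s ∈ uIcc a b, ∀ t ∈ uIcc a b, dist (φ s) (φ t) ≤ K * dist (ψ s) (ψ t)) :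
    AbsolutelyContinuousOnInterval φ a b := by
  have hlim := Filter.Tendsto.const_mul K hψ
  rw [mul_zero] at hlim
  refine squeeze_zero' (.of_forall fun I => Finset.sum_nonneg fun _ _ => dist_nonneg) ?_ hlim
  filter_upwards [mem_inf_of_right (mem_principal_self _)] with I hI
  rw [Finset.mul_sum]
  exact Finset.sum_le_sum fun i hi => hle _ (hI.1 i hi).1 _ (hI.1 i hi).2

lemma continuousOn_Ici_of_absolutelyContinuousOnInterval {Y : Type*}
    [SeminormedAddCommGroup Y] {x : ℝ → Y} {a : ℝ}
    (hx : ∀ T, a ≤ T → AbsolutelyContinuousOnInterval x a T) : ContinuousOn x (Ici a) := by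
  intro t ht
  have hat : a ≤ t + 1 := le_add_of_le_of_nonneg ht zero_le_one
  refine ((hx _ hat).continuousOn t (mem_uIcc_of_le ht (lt_add_one t).le)).mono_of_mem_nhdsWithin ?_
  rw [uIcc_of_le hat, ← Ici_inter_Iic]
  exact inter_mem_nhdsWithin _ (Iic_mem_nhds (lt_add_one t))

variable {E : Type*} [NormedAddCommGroup E] [NormedSpace ℝ E] {x d : ℝ → E} {a b : ℝ}

lemma absolutelyContinuousOnInterval_intervalIntegral (hd : IntervalIntegrable d volume a b) :
    AbsolutelyContinuousOnInterval (fun t => ∫ s in a..t, d s) a b := by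
  refine absolutelyContinuousOnInterval_of_dist_le (K := 1)
    (hd.norm.absolutelyContinuousOnInterval_intervalIntegral left_mem_uIcc) fun s hs t ht => ?_
  have hint : ∀ r ∈ uIcc a b, IntervalIntegrable d volume a r := fun r hr =>
    hd.mono_set (uIcc_subset_uIcc_left hr)
  rw [one_mul, dist_eq_norm, Real.dist_eq,
    intervalIntegral.integral_interval_sub_left (hint s hs) (hint t ht),
    intervalIntegral.integral_interval_sub_left (hint s hs).norm (hint t ht).norm]
  exact intervalIntegral.norm_integral_le_abs_integral_norm

lemma absolutelyContinuousOnInterval_contDiff_comp {G : Type*} [NormedAddCommGroup G]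
    [NormedSpace ℝ G] {v : E → G} (hv : ContDiff ℝ 1 v)
    (hx : AbsolutelyContinuousOnInterval x a b) :
    AbsolutelyContinuousOnInterval (fun t => v (x t)) a b := by
  obtain ⟨K, hK⟩ := (hv.locallyLipschitz.locallyLipschitzOn
    (s := x '' uIcc a b)).exists_lipschitzOnWith_of_compact
    (isCompact_uIcc.image_of_continuousOn hx.continuousOn)
  exact absolutelyContinuousOnInterval_of_dist_le hx fun s hs t ht =>
    hK.dist_le_mul _ (mem_image_of_mem x hs) _ (mem_image_of_mem x ht)

lemma absolutelyContinuousOnInterval_of_eq_integral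
    (hd : IntervalIntegrable d volume a b)
    (hx : ∀ t ∈ uIcc a b, x t = x a + ∫ s in a..t, d s) :
    AbsolutelyContinuousOnInterval x a b := by
  refine absolutelyContinuousOnInterval_of_dist_le (K := 1)
    (absolutelyContinuousOnInterval_intervalIntegral hd) fun s hs t ht => ?_
  rw [hx s hs, hx t ht, dist_add_left, one_mul]

lemma ae_hasDerivAt_of_eq_integral [CompleteSpace E]
    (hd : ∀ t, a ≤ t → IntervalIntegrable d volume a t)
    (hx : ∀ t, a ≤ t → x t = x a + ∫ s in a..t, d s) :
    ∀ᵐ t ∂volume.restrict (Ici a), HasDerivAt x (d t) t := by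
  have hprim : ∀ᵐ t, ∀ k : ℕ, t ∈ uIcc a (a + k) →
      ∀ c ∈ uIcc a (a + k), HasDerivAt (fun r => ∫ s in c..r, d s) (d t) t :=
    ae_all_iff.2 fun k => (hd (a + k) (by simp)).ae_hasDerivAt_integral
  rw [ae_restrict_iff' measurableSet_Ici]
  -- `x` is arbitrary to the left of `a`, so the endpoint is excluded.
  filter_upwards [hprim, Measure.ae_ne volume a] with t ht hta hat
  obtain ⟨k, hk⟩ := exists_nat_ge (t - a)
  have hmem : t ∈ uIcc a (a + k) := mem_uIcc_of_le hat (by linarith)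
  refine ((ht k hmem a left_mem_uIcc).const_add (x a)).congr_of_eventuallyEq ?_
  filter_upwards [lt_mem_nhds (lt_of_le_of_ne hat hta.symm)] with s hs using hx s hs.le

end AbsolutelyContinuous

section HalfLine

variable {φ φ' : ℝ → ℝ} {a b β : ℝ}

lemma integral_eq_sub_of_ae_hasDerivAt (hφ : AbsolutelyContinuousOnInterval φ a b)
    (hφ' : ∀ᵐ t, t ∈ uIcc a b → HasDerivAt φ (φ' t) t) : ∫ t in a..b, φ' t = φ b - φ a := by
  rw [← hφ.integral_deriv_eq_sub]
  refine intervalIntegral.integral_congr_ae ?_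
  filter_upwards [hφ'] with t ht hmem
  exact (ht (uIoc_subset_uIcc hmem)).deriv.symm

lemma integral_Ici_of_ae_hasDerivAt (hφ : ∀ T, a ≤ T → AbsolutelyContinuousOnInterval φ a T)
    (hφ' : ∀ᵐ t ∂volume.restrict (Ici a), HasDerivAt φ (φ' t) t)
    (hint : IntegrableOn φ (Ici a)) (hint' : IntegrableOn φ' (Ici a)) :
    ∫ t in Ici a, φ' t = -φ a := by
  have hftc : ∀ T, a ≤ T → (∫ t in a..T, φ' t) + φ a = φ T := by
    intro T hT
    rw [integral_eq_sub_of_ae_hasDerivAt (hφ T hT), sub_add_cancel]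
    filter_upwards [(ae_restrict_iff' measurableSet_Ici).1 hφ'] with t ht hmem
    exact ht (uIcc_of_le hT ▸ hmem).1
  have hlim : Tendsto φ atTop (𝓝 ((∫ t in Ici a, φ' t) + φ a)) := by
    rw [integral_Ici_eq_integral_Ioi]
    refine ((intervalIntegral_tendsto_integral_Ioi a (hint'.mono_set Ioi_subset_Ici_self)
      tendsto_id).add_const (φ a)).congr' ?_
    filter_upwards [eventually_ge_atTop a] with T hT using hftc T hT
  have hzero : (∫ t in Ici a, φ' t) + φ a = 0 := by
    refine IntegrableAtFilter.eq_zero_of_tendsto ⟨Ici a, Ici_mem_atTop a, hint⟩ ?_ hlim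
    intro s hs
    obtain ⟨c, hc⟩ := mem_atTop_sets.1 hs
    exact top_unique (Real.volume_Ici (a := c) ▸ measure_mono hc)
  exact eq_neg_of_add_eq_zero_left hzero

lemma lintegral_exp_neg_mul_Ici (hβ : 0 < β) :
    ∫⁻ t in Ici (0 : ℝ), ENNReal.ofReal (Real.exp (-β * t)) = ENNReal.ofReal (1 / β) := by
  have hβ' : -β < 0 := neg_neg_of_pos hβ
  rw [setLIntegral_congr Ioi_ae_eq_Ici.symm,
    ← ofReal_integral_eq_lintegral_ofReal (integrableOn_exp_mul_Ioi hβ' 0)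
      (.of_forall fun t => (Real.exp_pos _).le), integral_exp_mul_Ioi hβ' 0]
  simp

end HalfLine

section CompProd

variable {α E F : Type*} [MeasurableSpace α] [MeasurableSpace F] {m : Measure α} [SFinite m]
  {κ : Kernel α F} [IsMarkovKernel κ] {x y : α → E}

lemma measurePreserving_fst_compProd : MeasurePreserving Prod.fst (m ⊗ₘ κ) m :=
  ⟨measurable_fst, Measure.fst_compProd m κ⟩

lemma aemeasurable_prodMap_id_compProd [MeasurableSpace E] (hx : AEMeasurable x m) :
    AEMeasurable (Prod.map x id) (m ⊗ₘ κ) :=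
  (hx.comp_quasiMeasurePreserving
    measurePreserving_fst_compProd.quasiMeasurePreserving).prodMk measurable_snd.aemeasurable

lemma prodMap_id_ae_eq_compProd (hxy : x =ᵐ[m] y) :
    Prod.map x id =ᵐ[m ⊗ₘ κ] Prod.map y id := by
  have hfst := measurePreserving_fst_compProd (m := m) (κ := κ)
  filter_upwards [hfst.quasiMeasurePreserving.ae hxy] with p hp using Prod.ext hp rfl

end CompProd

/-- The measure `e^{-βt} dt` on the half-line `[0, ∞)`, against which an instantaneous cost is
integrated to give its discounted total. -/
noncomputable def discountMeasure (β : ℝ) : Measure ℝ :=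
  (volume.restrict (Ici 0)).withDensity fun t => ENNReal.ofReal (Real.exp (-β * t))

section discountMeasure

variable {β : ℝ} {φ φ' : ℝ → ℝ}

lemma measurable_ofReal_exp_neg_mul (β : ℝ) :
    Measurable fun t : ℝ => ENNReal.ofReal (Real.exp (-β * t)) := by
  fun_prop

instance (β : ℝ) : SFinite (discountMeasure β) := by
  unfold discountMeasure
  infer_instance

lemma ae_discountMeasure_iff {p : ℝ → Prop} :
    (∀ᵐ t ∂discountMeasure β, p t) ↔ ∀ᵐ t ∂volume.restrict (Ici 0), p t := by
  rw [discountMeasure, ae_withDensity_iff (measurable_ofReal_exp_neg_mul β)]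
  simp only [ne_eq, ENNReal.ofReal_eq_zero, not_le, Real.exp_pos, forall_const]

lemma integrable_discountMeasure_iff :
    Integrable φ (discountMeasure β) ↔
      IntegrableOn (fun t => Real.exp (-β * t) * φ t) (Ici 0) := by
  rw [discountMeasure, integrable_withDensity_iff_integrable_smul'
    (measurable_ofReal_exp_neg_mul β) (by simp), IntegrableOn]
  simp only [ENNReal.toReal_ofReal (Real.exp_pos _).le, smul_eq_mul]

lemma integral_discountMeasure :
    ∫ t, φ t ∂discountMeasure β = ∫ t in Ici 0, Real.exp (-β * t) * φ t := by
  rw [discountMeasure, integral_withDensity_eq_integral_toReal_smul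
    (measurable_ofReal_exp_neg_mul β) (by simp)]
  simp only [ENNReal.toReal_ofReal (Real.exp_pos _).le, smul_eq_mul]

theorem mul_integral_discountMeasure_of_ae_hasDerivAt
    (hφ : ∀ T, 0 ≤ T → AbsolutelyContinuousOnInterval φ 0 T)
    (hφ' : ∀ᵐ t ∂volume.restrict (Ici 0), HasDerivAt φ (φ' t) t)
    (hint : Integrable φ (discountMeasure β)) (hint' : Integrable φ' (discountMeasure β)) :
    β * ∫ t, φ t ∂discountMeasure β = φ 0 + ∫ t, φ' t ∂discountMeasure β := by
  let w : ℝ → ℝ := fun t => Real.exp (-β * t)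
  have hac : ∀ T, 0 ≤ T → AbsolutelyContinuousOnInterval (fun t => w t * φ t) 0 T := fun T hT =>
    (ContDiff.contDiffOn (by fun_prop)).absolutelyContinuousOnInterval.mul (hφ T hT)
  have hderiv : ∀ᵐ t ∂volume.restrict (Ici 0),
      HasDerivAt (fun t => w t * φ t) (w t * φ' t - β * (w t * φ t)) t := by
    filter_upwards [hφ'] with t ht
    have hw : HasDerivAt w (w t * -β) t := by
      simpa [w] using ((hasDerivAt_id t).const_mul (-β)).exp
    exact (hw.mul ht).congr_deriv (by ring)
  rw [integrable_discountMeasure_iff] at hint hint'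
  have hftc := integral_Ici_of_ae_hasDerivAt hac hderiv hint (hint'.sub (hint.const_mul β))
  rw [integral_sub hint' (hint.const_mul β), integral_const_mul] at hftc
  rw [integral_discountMeasure, integral_discountMeasure]
  simp only [w, mul_zero, Real.exp_zero, one_mul] at hftc
  linarith

end discountMeasure

/-- `μ` is the discounted occupation measure of the curve `x` under the relaxed control `ν`:
`μ (A × B) = ∫_0^∞ e^{-βt} 1_A(x(t)) ν_t(B) dt`. As `μ` is finite when `0 < β`, its values on
measurable rectangles determine it. -/
def IsDiscountedOccupationMeasure {E F : Type*} [MeasurableSpace E] [MeasurableSpace F] (β : ℝ)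
    (x : ℝ → E) (ν : ℝ → Measure F) (μ : Measure (E × F)) : Prop :=
  ∀ (A : Set E) (B : Set F), MeasurableSet A → MeasurableSet B →
    μ (A ×ˢ B) = ∫⁻ t in Ici (0 : ℝ),
      ENNReal.ofReal (Real.exp (-β * t)) * A.indicator (fun _ => (1 : ℝ≥0∞)) (x t) * ν t B

namespace IsDiscountedOccupationMeasure

section Measurable

variable {E F : Type*} [MeasurableSpace E] [MeasurableSpace F] {β : ℝ} {x : ℝ → E}
  {ν : ℝ → Measure F} [∀ t, IsProbabilityMeasure (ν t)] {μ : Measure (E × F)} {A : Set E}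
  {B : Set F}

lemma measure_prod_of_forall_mem (hμ : IsDiscountedOccupationMeasure β x ν μ) (hβ : 0 < β)
    (hA : MeasurableSet A) (hB : MeasurableSet B) (hxA : ∀ t, 0 ≤ t → x t ∈ A)
    (hνB : ∀ t, 0 ≤ t → ∀ᵐ u ∂ν t, u ∈ B) : μ (A ×ˢ B) = ENNReal.ofReal (1 / β) := by
  rw [hμ A B hA hB, ← lintegral_exp_neg_mul_Ici hβ]
  refine setLIntegral_congr_fun measurableSet_Ici fun t ht => ?_
  have hone : ν t B = 1 := (prob_compl_eq_zero_iff hB).1 (hνB t ht)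
  simp [hone, hxA t ht]

lemma measure_univ (hμ : IsDiscountedOccupationMeasure β x ν μ) (hβ : 0 < β) :
    μ univ = ENNReal.ofReal (1 / β) := by
  rw [← univ_prod_univ]
  exact hμ.measure_prod_of_forall_mem hβ .univ .univ (by simp) (by simp)

lemma isFiniteMeasure (hμ : IsDiscountedOccupationMeasure β x ν μ) (hβ : 0 < β) :
    IsFiniteMeasure μ :=
  ⟨hμ.measure_univ hβ ▸ ENNReal.ofReal_lt_top⟩

lemma ae_mem_prod (hμ : IsDiscountedOccupationMeasure β x ν μ) (hβ : 0 < β)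
    (hA : MeasurableSet A) (hB : MeasurableSet B) (hxA : ∀ t, 0 ≤ t → x t ∈ A)
    (hνB : ∀ t, 0 ≤ t → ∀ᵐ u ∂ν t, u ∈ B) : ∀ᵐ p ∂μ, p ∈ A ×ˢ B := by
  have := hμ.isFiniteMeasure hβ
  rw [ae_mem_iff_measure_eq (hA.prod hB).nullMeasurableSet, hμ.measure_univ hβ]
  exact hμ.measure_prod_of_forall_mem hβ hA hB hxA hνB

end Measurable

section Kernel

variable {E F G : Type*} [MeasurableSpace E] [MeasurableSpace F] [NormedAddCommGroup G] {β : ℝ}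
  {x y : ℝ → E} {κ : Kernel ℝ F} {μ : Measure (E × F)} {g : E × F → G}

lemma congr_ae (hμ : IsDiscountedOccupationMeasure β x κ μ) (hxy : x =ᵐ[discountMeasure β] y) :
    IsDiscountedOccupationMeasure β y κ μ := by
  intro A B hA hB
  rw [hμ A B hA hB]
  refine lintegral_congr_ae ?_
  filter_upwards [ae_discountMeasure_iff.1 hxy] with t ht
  rw [ht]

variable [IsMarkovKernel κ]

lemma eq_map_compProd_of_measurable (hμ : IsDiscountedOccupationMeasure β x κ μ) (hβ : 0 < β)
    (hx : Measurable x) : μ = (discountMeasure β ⊗ₘ κ).map (Prod.map x id) := by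
  have := hμ.isFiniteMeasure hβ
  refine Measure.ext_prod fun {A B} hA hB => ?_
  have hpre : Prod.map x id ⁻¹' (A ×ˢ B) = (x ⁻¹' A) ×ˢ B := rfl
  rw [hμ A B hA hB, Measure.map_apply (hx.prodMap measurable_id) (hA.prod hB), hpre,
    Measure.compProd_apply_prod (hx hA) hB, ← lintegral_indicator (hx hA), discountMeasure,
    lintegral_withDensity_eq_lintegral_mul _ (measurable_ofReal_exp_neg_mul β)
      ((κ.measurable_coe hB).indicator (hx hA))]
  refine lintegral_congr fun t => ?_
  by_cases ht : x t ∈ A <;> simp [indicator, ht]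

lemma eq_map_compProd (hμ : IsDiscountedOccupationMeasure β x κ μ) (hβ : 0 < β)
    (hx : AEMeasurable x (discountMeasure β)) :
    μ = (discountMeasure β ⊗ₘ κ).map (Prod.map x id) := by
  rw [(hμ.congr_ae hx.ae_eq_mk).eq_map_compProd_of_measurable hβ hx.measurable_mk]
  exact Measure.map_congr (prodMap_id_ae_eq_compProd hx.ae_eq_mk.symm)

lemma integrable_comp_prodMap (hμ : IsDiscountedOccupationMeasure β x κ μ) (hβ : 0 < β)
    (hx : AEMeasurable x (discountMeasure β)) (hg : Integrable g μ) :
    Integrable (fun p => g (x p.1, p.2)) (discountMeasure β ⊗ₘ κ) := by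
  rw [hμ.eq_map_compProd hβ hx] at hg
  exact hg.comp_aemeasurable (aemeasurable_prodMap_id_compProd hx)

lemma ae_integrable (hμ : IsDiscountedOccupationMeasure β x κ μ) (hβ : 0 < β)
    (hx : AEMeasurable x (discountMeasure β)) (hg : Integrable g μ) :
    ∀ᵐ t ∂discountMeasure β, Integrable (fun u => g (x t, u)) (κ t) :=
  ((Measure.integrable_compProd_iff (hμ.integrable_comp_prodMap hβ hx hg).1).1
    (hμ.integrable_comp_prodMap hβ hx hg)).1

variable [NormedSpace ℝ G]

lemma integrable_integral (hμ : IsDiscountedOccupationMeasure β x κ μ) (hβ : 0 < β)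
    (hx : AEMeasurable x (discountMeasure β)) (hg : Integrable g μ) :
    Integrable (fun t => ∫ u, g (x t, u) ∂κ t) (discountMeasure β) := by
  have hfibre := (hμ.integrable_comp_prodMap hβ hx hg).integral_compProd
  simpa only [Kernel.const_apply, Kernel.prodMkLeft_apply] using hfibre

lemma integral_eq_integral_integral (hμ : IsDiscountedOccupationMeasure β x κ μ) (hβ : 0 < β)
    (hx : AEMeasurable x (discountMeasure β)) (hg : Integrable g μ) :
    ∫ p, g p ∂μ = ∫ t, ∫ u, g (x t, u) ∂κ t ∂discountMeasure β := by
  rw [← Measure.integral_compProd (f := fun p => g (x p.1, p.2))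
    (hμ.integrable_comp_prodMap hβ hx hg)]
  have hgm := hg.aestronglyMeasurable
  rw [hμ.eq_map_compProd hβ hx] at hgm ⊢
  exact integral_map (aemeasurable_prodMap_id_compProd hx) hgm

end Kernel

section Liouville

variable {E F : Type*} [NormedAddCommGroup E] [NormedSpace ℝ E] [CompleteSpace E]
  [MeasurableSpace E] [BorelSpace E] [MeasurableSpace F] {β : ℝ} {x d : ℝ → E} {f : E → F → E}
  {v : E → ℝ} {κ : Kernel ℝ F} [IsMarkovKernel κ] {μ : Measure (E × F)}

theorem mul_integral_eq_add_integral_fderiv (hμ : IsDiscountedOccupationMeasure β x κ μ)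
    (hβ : 0 < β) (hv : ContDiff ℝ 1 v)
    (hd : ∀ t, 0 ≤ t → IntervalIntegrable d volume 0 t)
    (hx : ∀ t, 0 ≤ t → x t = x 0 + ∫ s in (0 : ℝ)..t, d s)
    (hode : ∀ᵐ t ∂volume.restrict (Ici 0), d t = ∫ u, f (x t) u ∂κ t)
    (hfint : Integrable (fun p => f p.1 p.2) μ) (hvint : Integrable (fun p => v p.1) μ)
    (hDvint : Integrable (fun p => fderiv ℝ v p.1 (f p.1 p.2)) μ) :
    β * ∫ p, v p.1 ∂μ = v (x 0) + ∫ p, fderiv ℝ v p.1 (f p.1 p.2) ∂μ := by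
  have hac : ∀ T, 0 ≤ T → AbsolutelyContinuousOnInterval x 0 T := fun T hT =>
    absolutelyContinuousOnInterval_of_eq_integral (hd T hT) fun t ht =>
      hx t (uIcc_of_le hT ▸ ht).1
  have hxm : AEMeasurable x (discountMeasure β) :=
    ((continuousOn_Ici_of_absolutelyContinuousOnInterval hac).aemeasurable
      measurableSet_Ici).mono_ac (withDensity_absolutelyContinuous _ _)
  have hchain : ∀ᵐ t ∂volume.restrict (Ici 0), HasDerivAt (fun t => v (x t))
      (∫ u, fderiv ℝ v (x t) (f (x t) u) ∂κ t) t := by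
    filter_upwards [ae_hasDerivAt_of_eq_integral hd hx, hode,
      ae_discountMeasure_iff.1 (hμ.ae_integrable hβ hxm hfint)] with t hxt hdt hft
    rw [(fderiv ℝ v (x t)).integral_comp_comm hft, ← hdt]
    exact (hv.differentiable one_ne_zero (x t)).hasFDerivAt.comp_hasDerivAt t hxt
  have hvx := hμ.integrable_integral hβ hxm hvint
  have hDvx := hμ.integrable_integral hβ hxm hDvint
  rw [hμ.integral_eq_integral_integral hβ hxm hvint,
    hμ.integral_eq_integral_integral hβ hxm hDvint]
  simp only [integral_const, probReal_univ, one_smul] at hvx ⊢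
  exact mul_integral_discountMeasure_of_ae_hasDerivAt
    (fun T hT => absolutelyContinuousOnInterval_contDiff_comp hv (hac T hT)) hchain hvx hDvx

end Liouville

end IsDiscountedOccupationMeasure

theorem continuous_discounted_occupation_measure_satisfies_Liouville_general {E F : Type*}
    [NormedAddCommGroup E] [NormedSpace ℝ E] [CompleteSpace E] [SecondCountableTopology E]
    [MeasurableSpace E] [BorelSpace E] [TopologicalSpace F] [MeasurableSpace F]
    [OpensMeasurableSpace F] {X : Set E} {U : Set F} (hX : IsCompact X) (hU : IsClosed U)
    {f : E → F → E} {β : ℝ} (hβ : 0 < β) {x : ℝ → E} (hxX : ∀ t, 0 ≤ t → x t ∈ X)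
    {ν : ℝ → Measure F} [hνprob : ∀ t, IsProbabilityMeasure (ν t)] (hνmeas : Measurable ν)
    (hνU : ∀ t, 0 ≤ t → ∀ᵐ u ∂ν t, u ∈ U) {d : ℝ → E}
    (hInt : ∀ t, 0 ≤ t → IntervalIntegrable d volume 0 t)
    (hAC : ∀ t, 0 ≤ t → x t = x 0 + ∫ s in (0 : ℝ)..t, d s)
    (hode : ∀ᵐ t ∂volume.restrict (Ici 0), d t = ∫ u, f (x t) u ∂ν t)
    {μ : Measure (E × F)} (hμ : IsDiscountedOccupationMeasure β x ν μ)
    (hf : Integrable (fun p => f p.1 p.2) μ) :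
    IsFiniteMeasure μ ∧ msupport μ ⊆ X ×ˢ U ∧ μ (X ×ˢ U) = ENNReal.ofReal (1 / β) ∧
      ∀ v : E → ℝ, ContDiff ℝ 1 v →
        β * ∫ p, v p.1 ∂μ =
          ∫ y, v y ∂Measure.dirac (x 0) + ∫ p, fderiv ℝ v p.1 (f p.1 p.2) ∂μ := by
  let κ : Kernel ℝ F := ⟨ν, hνmeas⟩
  have : IsMarkovKernel κ := ⟨hνprob⟩
  have hfin := hμ.isFiniteMeasure hβ
  have hsupp := hμ.ae_mem_prod hβ hX.measurableSet hU.measurableSet hxX hνU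
  refine ⟨hfin, msupport_subset_of_isClosed (hX.isClosed.prod hU) hsupp,
    hμ.measure_prod_of_forall_mem hβ hX.measurableSet hU.measurableSet hxX hνU, fun v hv => ?_⟩
  have hvint : Integrable (fun p => v p.1) μ := by
    obtain ⟨C, hC⟩ := hX.exists_bound_of_continuousOn hv.continuous.continuousOn
    exact .of_bound (hv.continuous.stronglyMeasurable.comp_measurable
      measurable_fst).aestronglyMeasurable C (hsupp.mono fun p hp => hC p.1 hp.1)
  have hDvint : Integrable (fun p => fderiv ℝ v p.1 (f p.1 p.2)) μ := by
    have hDv := hv.continuous_fderiv one_ne_zero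
    obtain ⟨C, hC⟩ := hX.exists_bound_of_continuousOn hDv.continuousOn
    exact integrable_continuousLinearMap_apply (hDv.stronglyMeasurable.comp_measurable
      measurable_fst).aestronglyMeasurable (hsupp.mono fun p hp => hC p.1 hp.1) hf
  rw [integral_dirac]
  exact IsDiscountedOccupationMeasure.mul_integral_eq_add_integral_fderiv (κ := κ) hμ hβ hv hInt hAC
    hode hf hvint hDvint

theorem continuous_discounted_occupation_measure_satisfies_Liouville {n m : ℕ}
    (X : Set (EuclideanSpace ℝ (Fin n))) (U : Set (EuclideanSpace ℝ (Fin m)))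
    (hX : IsCompact X) (hU : IsCompact U)
    (f : EuclideanSpace ℝ (Fin n) → EuclideanSpace ℝ (Fin m) → EuclideanSpace ℝ (Fin n))
    (hf : Continuous fun p : EuclideanSpace ℝ (Fin n) × EuclideanSpace ℝ (Fin m) => f p.1 p.2)
    (β : ℝ) (hβ : 0 < β)
    (x0 : EuclideanSpace ℝ (Fin n)) (hx0 : x0 ∈ X)
    -- the trajectory, staying in `X`, starting at `x0`
    (x : ℝ → EuclideanSpace ℝ (Fin n)) (hxX : ∀ t, 0 ≤ t → x t ∈ X) (hinit : x 0 = x0)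
    -- the relaxed control: a family of Borel probability measures on `U`, measurable in `t`
    (ν : ℝ → Measure (EuclideanSpace ℝ (Fin m)))
    (hνprob : ∀ t, IsProbabilityMeasure (ν t))
    (hνmeas : Measurable ν)
    (hνU : ∀ t, 0 ≤ t → msupport (ν t) ⊆ U)
    -- local absolute continuity of `x` with a.e. derivative `d`
    (d : ℝ → EuclideanSpace ℝ (Fin n))
    (hInt : ∀ t, 0 ≤ t → IntervalIntegrable d volume 0 t)
    (hAC : ∀ t, 0 ≤ t → x t = x 0 + ∫ s in (0:ℝ)..t, d s)
    -- `ẋ(t) = ∫_U f(x(t), u) dν_t(u)` for a.e. `t ≥ 0`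
    (hode : ∀ᵐ t ∂(volume.restrict (Set.Ici (0:ℝ))), d t = ∫ u, f (x t) u ∂(ν t))
    -- the discounted occupation measure: `μ(A × B) = ∫_0^∞ e^{-βt} 1_A(x(t)) ν_t(B) dt`
    (μ : Measure (EuclideanSpace ℝ (Fin n) × EuclideanSpace ℝ (Fin m)))
    (hμ : ∀ (A : Set (EuclideanSpace ℝ (Fin n))) (B : Set (EuclideanSpace ℝ (Fin m))),
      MeasurableSet A → MeasurableSet B →
      μ (A ×ˢ B) = ∫⁻ t in Set.Ici (0:ℝ),
        ENNReal.ofReal (Real.exp (-β * t)) * A.indicator (fun _ => (1:ℝ≥0∞)) (x t) * ν t B) :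
    IsFiniteMeasure μ ∧
    msupport μ ⊆ X ×ˢ U ∧
    μ (X ×ˢ U) = ENNReal.ofReal (1 / β) ∧
    LiouvilleC f β (Measure.dirac x0) μ := by
  subst hinit
  have hocc : IsDiscountedOccupationMeasure β x ν μ := hμ
  have hνae : ∀ t, 0 ≤ t → ∀ᵐ u ∂ν t, u ∈ U := fun t ht => ae_mem_of_msupport_subset (hνU t ht)
  have hfin := hocc.isFiniteMeasure hβ
  have hsupp := hocc.ae_mem_prod hβ hX.measurableSet hU.measurableSet hxX hνae
  exact continuous_discounted_occupation_measure_satisfies_Liouville_general hX hU.isClosed hβ hxX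
    hνmeas hνae hInt hAC hode hocc
    (integrable_of_continuous_of_ae_mem_isCompact hf (hX.prod hU) hsupp)
end

section
/- Let (μ₀, μ) be finite nonnegative Borel measures, with μ₀ supported in X and μ supported in X × U, satisfying the continuous-time discounted Liouville equation. Then there exists a finite nonnegative Borel measure η on the space C([0,∞); ℝⁿ) of continuous paths (with the topology of uniform convergence on compact sets), concentrated on the set of admissible trajectories, such that the pushforward of η under the evaluation map γ ↦ γ(0) equals μ₀, and for every continuous g : ℝⁿ → ℝ one has ∫ g(x) dμ(x,u) = ∫ (∫_0^∞ e^{−βt} g(γ(t)) dt) dη(γ); i.e., the x-marginal of μ equals the x-marginal of the discounted occupation measure of the family of trajectories distributed according to η. -/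
open MeasureTheory

/-- An admissible trajectory of the convexified inclusion
`ẋ(t) ∈ conv f(x(t), U)`, `x(t) ∈ X`, on `[0, ∞)`. -/
def IsAdmissible {n m : ℕ} (X : Set (EuclideanSpace ℝ (Fin n)))
    (U : Set (EuclideanSpace ℝ (Fin m)))
    (f : EuclideanSpace ℝ (Fin n) → EuclideanSpace ℝ (Fin m) → EuclideanSpace ℝ (Fin n))
    (x : ℝ → EuclideanSpace ℝ (Fin n)) : Prop :=
  (∀ t, 0 ≤ t → x t ∈ X) ∧
  ∃ d : ℝ → EuclideanSpace ℝ (Fin n),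
    (∀ t, 0 ≤ t → IntervalIntegrable d volume 0 t) ∧
    (∀ t, 0 ≤ t → x t = x 0 + ∫ s in (0:ℝ)..t, d s) ∧
    (∀ᵐ t ∂(volume.restrict (Set.Ici (0:ℝ))), d t ∈ convexHull ℝ ((f (x t)) '' U))

/-- Borel σ-algebra on the space of continuous paths `C(ℝ, ℝⁿ)` with the compact-open
topology (i.e. the topology of uniform convergence on compact sets). -/
noncomputable instance pathMeasurableSpace (n : ℕ) :
    MeasurableSpace C(ℝ, EuclideanSpace ℝ (Fin n)) := borel _

/-!
By Hahn–Banach and the Riesz representation theorem, a measure on the compact set of viable paths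
with the two prescribed marginals exists as soon as `∫ w dμ₀ + ∫ g dμ ≥ 0` whenever the total cost
`w(γ(0)) + ∫₀^∞ e^{-βt} g(γ(t)) dt` is nonnegative on every viable path `γ`. If there is a smooth
`v ≥ -w` with `βv - ∇v · f ≤ g`, testing the Liouville equation with `v` gives this inequality. The
natural candidate is the value function of the running cost `g`, which is neither finite outside
the viability kernel nor smooth. Relaxing the constraints by `δ` and allowing a path to be killed,
at a cost `1/δ` times the discount factor at the killing time, makes the value function bounded and
measurable; its mollification is smooth and, for small radii, still a subsolution up to a small
error. By compactness the relaxed value functions are at least `-w - ε` on `X` for small `δ`.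
-/

section Superposition

open Set Filter Topology Metric
open scoped BoundedContinuousFunction NNReal

section Convexity

variable {E : Type*} [NormedAddCommGroup E] [NormedSpace ℝ E] {s t : Set E}

theorem isCompact_convexJoin (hs : IsCompact s) (ht : IsCompact t) :
    IsCompact (convexJoin ℝ s t) := by
  have himage : convexJoin ℝ s t =
      (fun q : ℝ × E × E => AffineMap.lineMap q.2.1 q.2.2 q.1) '' (Icc 0 1 ×ˢ s ×ˢ t) := by
    ext x
    simp only [mem_convexJoin, segment_eq_image_lineMap, mem_image, Prod.exists, mem_prod]
    exact ⟨fun ⟨a, ha, b, hb, r, hr, h⟩ => ⟨r, a, b, ⟨hr, ha, hb⟩, h⟩,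
      fun ⟨r, a, b, ⟨hr, ha, hb⟩, h⟩ => ⟨a, ha, b, hb, r, hr, h⟩⟩
  rw [himage]
  refine (isCompact_Icc.prod (hs.prod ht)).image ?_
  simp only [AffineMap.lineMap_apply_module]
  fun_prop

theorem exists_isCompact_subset_convexHull (hs : IsCompact s) (n : ℕ) :
    ∃ C ⊆ convexHull ℝ s, IsCompact C ∧
      ∀ t : Finset E, (t : Set E) ⊆ s → t.card ≤ n → convexHull ℝ (t : Set E) ⊆ C := by
  classical
  induction n with
  | zero =>
    refine ⟨∅, empty_subset _, isCompact_empty, fun t _ ht => ?_⟩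
    simp [Finset.card_eq_zero.1 (Nat.le_zero.1 ht)]
  | succ n ih =>
    obtain ⟨C, hCs, hC, hmem⟩ := ih
    have hsub := subset_convexHull ℝ s
    refine ⟨s ∪ convexJoin ℝ s C, union_subset hsub
      (convexJoin_subset hsub hCs (convex_convexHull ℝ s)), hs.union (isCompact_convexJoin hs hC),
      fun t hts ht => ?_⟩
    rcases t.eq_empty_or_nonempty with rfl | ⟨a, ha⟩
    · simp
    have hta := Finset.coe_subset.2 (t.erase_subset a)
    have hcard : (t.erase a).card ≤ n := by
      rw [Finset.card_erase_of_mem ha]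
      lia
    rw [← Finset.insert_erase ha, Finset.coe_insert]
    rcases (t.erase a).eq_empty_or_nonempty with he | hne
    · simpa [he] using Or.inl (hts ha)
    · rw [convexHull_insert (Finset.coe_nonempty.2 hne)]
      exact subset_union_of_subset_right (convexJoin_mono (singleton_subset_iff.2 (hts ha))
        (hmem _ (hta.trans hts) hcard)) _

theorem isCompact_convexHull_of_finiteDimensional [FiniteDimensional ℝ E] (hs : IsCompact s) :
    IsCompact (convexHull ℝ s) := by
  obtain ⟨C, hCs, hC, hmem⟩ := exists_isCompact_subset_convexHull hs (Module.finrank ℝ E + 1)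
  convert hC
  refine Subset.antisymm ?_ hCs
  rw [convexHull_eq_union]
  refine iUnion_subset fun t => iUnion_subset fun hts => iUnion_subset fun hind => hmem t hts ?_
  simpa using hind.card_le_finrank_succ.trans (Nat.succ_le_succ (Submodule.finrank_le _))

end Convexity

section OneSidedDerivative

theorem nonneg_of_hasDerivWithinAt_of_eventually_le {ψ : ℝ → ℝ} {ψ' a : ℝ}
    (hψ : HasDerivWithinAt ψ ψ' (Ioi a) a) (hle : ∀ᶠ t in 𝓝[>] a, ψ a ≤ ψ t) : 0 ≤ ψ' := by
  rw [hasDerivWithinAt_iff_tendsto_slope' self_notMem_Ioi] at hψ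
  refine ge_of_tendsto hψ ?_
  filter_upwards [hle, self_mem_nhdsWithin] with t ht hat
  rw [slope_def_field]
  exact div_nonneg (sub_nonneg.2 ht) (sub_nonneg.2 (mem_Ioi.1 hat).le)

end OneSidedDerivative

section Lipschitz

variable {E : Type*} [NormedAddCommGroup E] [NormedSpace ℝ E] [FiniteDimensional ℝ E]
  {M : ℝ≥0} {γ : ℝ → E}

theorem intervalIntegrable_deriv_of_lipschitzWith (hγ : LipschitzWith M γ) (a b : ℝ) :
    IntervalIntegrable (deriv γ) volume a b := by
  refine (intervalIntegrable_const (c := (M : ℝ))).mono_fun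
    (aestronglyMeasurable_deriv γ _) (ae_of_all _ fun t => ?_)
  simpa using norm_deriv_le_of_lipschitz hγ

theorem integral_deriv_eq_sub_of_lipschitzWith (hγ : LipschitzWith M γ) (a b : ℝ) :
    ∫ t in a..b, deriv γ t = γ b - γ a := by
  refine (SeparatingDual.eq_iff_forall_dual_eq (R := ℝ)).2 fun p => ?_
  have hpγ : LipschitzWith (‖p‖₊ * M) (p ∘ γ) := p.lipschitz.comp hγ
  have hderiv : ∀ᵐ t, p (deriv γ t) = deriv (p ∘ γ) t := by
    filter_upwards [hγ.ae_differentiableAt] with t ht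
    exact (p.hasFDerivAt.comp_hasDerivAt t ht.hasDerivAt).deriv.symm
  calc p (∫ t in a..b, deriv γ t)
      = ∫ t in a..b, p (deriv γ t) :=
        (p.intervalIntegral_comp_comm (intervalIntegrable_deriv_of_lipschitzWith hγ a b)).symm
    _ = ∫ t in a..b, deriv (p ∘ γ) t :=
        intervalIntegral.integral_congr_ae (hderiv.mono fun t ht _ => ht)
    _ = p (γ b) - p (γ a) :=
        hpγ.lipschitzOnWith.absolutelyContinuousOnInterval.integral_deriv_eq_sub
    _ = p (γ b - γ a) := (map_sub p _ _).symm

end Lipschitz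

theorem isCompact_setOfPred_lipschitzWith {α : Type*} [MetricSpace α] [ProperSpace α]
    {B : Set α} (hB : IsCompact B) (M : ℝ≥0) :
    IsCompact {γ : C(ℝ, α) | LipschitzWith M γ ∧ γ 0 ∈ B} := by
  refine ArzelaAscoli.isCompact_of_equicontinuous _ ?_
    (LipschitzWith.uniformEquicontinuous _ M fun γ => γ.2.1).equicontinuous
  have himage : ContinuousMap.toFun '' {γ : C(ℝ, α) | LipschitzWith M γ ∧ γ 0 ∈ B} =
      {γ : ℝ → α | LipschitzWith M γ ∧ γ 0 ∈ B} := by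
    ext γ
    exact ⟨by rintro ⟨γ, hγ, rfl⟩; exact hγ, fun hγ => ⟨⟨γ, hγ.1.continuous⟩, hγ, rfl⟩⟩
  rw [himage]
  refine (isCompact_univ_pi fun t : ℝ => hB.cthickening (r := M * dist t 0)).of_isClosed_subset
    ((isClosed_setOfPred_lipschitzWith M).inter (hB.isClosed.preimage (continuous_apply 0)))
    fun γ hγ t _ => mem_cthickening_of_dist_le _ (γ 0) _ _ hγ.2 (hγ.1.dist_le_mul t 0)

section DiscountedCost

variable {β : ℝ}

theorem integrableOn_exp_neg_mul_Ici (hβ : 0 < β) :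
    IntegrableOn (fun t : ℝ => Real.exp (-β * t)) (Ici 0) := by
  rw [integrableOn_Ici_iff_integrableOn_Ioi]
  exact integrableOn_exp_mul_Ioi (neg_neg_iff_pos.2 hβ) 0

theorem integral_exp_neg_mul_Ici (hβ : 0 < β) : ∫ t in Ici (0 : ℝ), Real.exp (-β * t) = 1 / β := by
  rw [integral_Ici_eq_integral_Ioi, integral_exp_mul_Ioi (neg_neg_iff_pos.2 hβ)]
  simp [neg_div_neg_eq]

/-- The cost `∫₀^∞ e^{-βt} g(γ(t)) dt` of the path `γ` for the running cost `g` and the discount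
factor `β`. -/
noncomputable def discountedCost {E : Type*} (β : ℝ) (g : E → ℝ) (γ : ℝ → E) : ℝ :=
  ∫ t in Ici (0 : ℝ), Real.exp (-β * t) * g (γ t)

theorem discountedCost_smul {E : Type*} (c : ℝ) (g : E → ℝ) (γ : ℝ → E) :
    discountedCost β (c • g) γ = c * discountedCost β g γ := by
  rw [discountedCost, discountedCost, ← integral_const_mul]
  simp only [Pi.smul_apply, smul_eq_mul, mul_left_comm]

section Integrability

variable {E : Type*} [TopologicalSpace E]

theorem integrableOn_exp_neg_mul_comp (hβ : 0 < β) (g : E →ᵇ ℝ) {γ : ℝ → E} (hγ : Continuous γ) :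
    IntegrableOn (fun t : ℝ => Real.exp (-β * t) * g (γ t)) (Ici 0) :=
  (integrableOn_exp_neg_mul_Ici hβ).mul_bdd (c := ‖g‖)
    (g.continuous.comp hγ).aestronglyMeasurable (ae_of_all _ fun _ => g.norm_coe_le_norm _)

theorem norm_exp_neg_mul_mul_le (g : E →ᵇ ℝ) (t : ℝ) (x : E) :
    ‖Real.exp (-β * t) * g x‖ ≤ Real.exp (-β * t) * ‖g‖ := by
  rw [norm_mul, Real.norm_of_nonneg (Real.exp_pos _).le]
  gcongr
  exact g.norm_coe_le_norm x

theorem abs_discountedCost_le (hβ : 0 < β) (g : E →ᵇ ℝ) (γ : ℝ → E) :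
    |discountedCost β g γ| ≤ ‖g‖ / β :=
  calc |discountedCost β g γ|
      ≤ ∫ t in Ici (0 : ℝ), Real.exp (-β * t) * ‖g‖ :=
        norm_integral_le_of_norm_le ((integrableOn_exp_neg_mul_Ici hβ).mul_const _)
          (ae_of_all _ fun _ => norm_exp_neg_mul_mul_le g _ _)
    _ = ‖g‖ / β := by
        rw [integral_mul_const, integral_exp_neg_mul_Ici hβ, one_div_mul_eq_div]

theorem discountedCost_add (hβ : 0 < β) (g₁ g₂ : E →ᵇ ℝ) {γ : ℝ → E} (hγ : Continuous γ) :
    discountedCost β (g₁ + g₂) γ = discountedCost β g₁ γ + discountedCost β g₂ γ := by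
  rw [discountedCost, discountedCost, discountedCost,
    ← integral_add (integrableOn_exp_neg_mul_comp hβ g₁ hγ)
      (integrableOn_exp_neg_mul_comp hβ g₂ hγ)]
  simp only [BoundedContinuousFunction.coe_add, Pi.add_apply, mul_add]

theorem discountedCost_sub_const (hβ : 0 < β) (g : E →ᵇ ℝ) {γ : ℝ → E} (hγ : Continuous γ)
    (c : ℝ) : discountedCost β (fun x => g x - c) γ = discountedCost β g γ - c / β := by
  simp only [discountedCost, mul_sub]
  rw [integral_sub (integrableOn_exp_neg_mul_comp hβ g hγ)
    ((integrableOn_exp_neg_mul_Ici hβ).mul_const c), integral_mul_const,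
    integral_exp_neg_mul_Ici hβ, one_div_mul_eq_div]

end Integrability

theorem continuous_discountedCost {E : Type*} [PseudoMetricSpace E] (hβ : 0 < β) (g : E →ᵇ ℝ) :
    Continuous fun γ : C(ℝ, E) => discountedCost β g γ :=
  continuous_of_dominated
    (fun γ => (integrableOn_exp_neg_mul_comp hβ g γ.continuous).aestronglyMeasurable)
    (fun γ => ae_of_all _ fun t => norm_exp_neg_mul_mul_le g t (γ t))
    ((integrableOn_exp_neg_mul_Ici hβ).mul_const _)
    (ae_of_all _ fun t => continuous_const.mul (g.continuous.comp (continuous_eval_const t)))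

section Shift

theorem setIntegral_Ici_eq_exp_mul_discountedCost {E : Type*} (g : E → ℝ) {γ γ' : ℝ → E} {h : ℝ}
    (hshift : ∀ t, 0 ≤ t → γ' (t + h) = γ t) :
    ∫ t in Ici h, Real.exp (-β * t) * g (γ' t) = Real.exp (-β * h) * discountedCost β g γ := by
  have htranslate := (measurePreserving_add_right volume h).setIntegral_preimage_emb
    (measurableEmbedding_addRight h) (fun t => Real.exp (-β * t) * g (γ' t)) (Ici h)
  rw [Set.preimage_add_const_Ici, sub_self] at htranslate
  rw [← htranslate, discountedCost, ← integral_const_mul]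
  refine setIntegral_congr_fun measurableSet_Ici fun t ht => ?_
  rw [hshift t ht, mul_add, Real.exp_add, mul_right_comm, mul_comm]

variable {E : Type*} [TopologicalSpace E]

theorem discountedCost_sub_le_of_shift (hβ : 0 < β) (g : E →ᵇ ℝ) {γ γ' : ℝ → E} (hγ : Continuous γ)
    (hγ' : Continuous γ') {h c : ℝ} (hh : 0 ≤ h) (hshift : ∀ t, 0 ≤ t → γ' (t + h) = γ t)
    (hc : ∀ t ∈ Icc 0 h, g (γ' t) ≤ c) :
    discountedCost β g γ' - c / β ≤ Real.exp (-β * h) * (discountedCost β g γ - c / β) := by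
  rw [← discountedCost_sub_const hβ g hγ, ← discountedCost_sub_const hβ g hγ',
    ← setIntegral_Ici_eq_exp_mul_discountedCost _ hshift]
  have hint := integrableOn_exp_neg_mul_comp hβ (g - .const E c) hγ'
  have hhead : ∫ t in Ico 0 h, Real.exp (-β * t) * (g (γ' t) - c) ≤ 0 :=
    setIntegral_nonpos measurableSet_Ico fun t ht =>
      mul_nonpos_of_nonneg_of_nonpos (Real.exp_pos _).le
        (sub_nonpos.2 (hc t (Ico_subset_Icc_self ht)))
  calc discountedCost β (fun x => g x - c) γ'
      = (∫ t in Ico 0 h, Real.exp (-β * t) * (g (γ' t) - c)) +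
          ∫ t in Ici h, Real.exp (-β * t) * (g (γ' t) - c) := by
        rw [discountedCost, ← Ico_union_Ici_eq_Ici hh]
        exact setIntegral_union (disjoint_left.2 fun _ ht => not_le.2 ht.2) measurableSet_Ici
          (hint.mono_set Ico_subset_Ici_self) (hint.mono_set (Ici_subset_Ici.2 hh))
    _ ≤ ∫ t in Ici h, Real.exp (-β * t) * (g (γ' t) - c) := add_le_of_nonpos_left hhead

end Shift

end DiscountedCost

section Viability

variable {E : Type*} [NormedAddCommGroup E] [NormedSpace ℝ E]

/-- The path `γ` stays in `Y` during the set of times `I`, and its velocity `γ'` satisfies the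
constraints `p γ' ≤ G(γ, p)` for all functionals `p`. The constraints are integrated in time: in
this form they make sense for every continuous path and survive locally uniform limits. -/
def ViableOn (G : E → StrongDual ℝ E → ℝ) (Y : Set E) (I : Set ℝ) (γ : ℝ → E) : Prop :=
  (∀ t ∈ I, γ t ∈ Y) ∧
    ∀ s ∈ I, ∀ t ∈ I, s ≤ t → ∀ p : StrongDual ℝ E, p (γ t - γ s) ≤ ∫ τ in s..t, G (γ τ) p

namespace ViableOn

variable {G : E → StrongDual ℝ E → ℝ} {Y : Set E} {I J : Set ℝ} {γ γ' : ℝ → E}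

theorem mono {G' : E → StrongDual ℝ E → ℝ} {Y' : Set E} (hγ : ViableOn G Y I γ)
    (hcont : Continuous γ) (hG : ∀ p, Continuous (G · p)) (hG' : ∀ p, Continuous (G' · p))
    (hY : Y ⊆ Y') (hle : ∀ x p, G x p ≤ G' x p) (hJ : J ⊆ I) : ViableOn G' Y' J γ := by
  refine ⟨fun t ht => hY (hγ.1 t (hJ ht)), fun s hs t ht hst p =>
    (hγ.2 s (hJ hs) t (hJ ht) hst p).trans ?_⟩
  exact intervalIntegral.integral_mono hst (((hG p).comp hcont).intervalIntegrable _ _)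
    (((hG' p).comp hcont).intervalIntegrable _ _) fun τ => hle (γ τ) p

theorem congr (hγ : ViableOn G Y I γ) (hI : I.OrdConnected) (heq : EqOn γ γ' I) :
    ViableOn G Y I γ' := by
  refine ⟨fun t ht => heq ht ▸ hγ.1 t ht, fun s hs t ht hst p => ?_⟩
  rw [← heq hs, ← heq ht]
  refine (hγ.2 s hs t ht hst p).trans_eq (intervalIntegral.integral_congr fun τ hτ => ?_)
  simp only [heq (hI.uIcc_subset hs ht hτ)]

theorem comp_sub_right (hγ : ViableOn G Y I γ) (h : ℝ) :
    ViableOn G Y ((· - h) ⁻¹' I) fun t => γ (t - h) := by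
  refine ⟨fun t ht => hγ.1 _ ht, fun s hs t ht hst p => ?_⟩
  rw [intervalIntegral.integral_comp_sub_right (fun τ => G (γ τ) p)]
  exact hγ.2 _ hs _ ht (sub_le_sub_right hst h) p

theorem union (hI : ViableOn G Y I γ) (hJ : ViableOn G Y J γ) (hγ : Continuous γ)
    (hG : ∀ p, Continuous (G · p)) {c : ℝ} (hIc : IsGreatest I c)
    (hJc : J.Nonempty → IsLeast J c) : ViableOn G Y (I ∪ J) γ := by
  have hint (p : StrongDual ℝ E) (a b : ℝ) :
      IntervalIntegrable (fun τ => G (γ τ) p) volume a b :=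
    ((hG p).comp hγ).intervalIntegrable a b
  refine ⟨fun t => Or.rec (hI.1 t) (hJ.1 t), ?_⟩
  rintro s (hs | hs) t (ht | ht) hst p
  · exact hI.2 s hs t ht hst p
  · have hc := hJc ⟨t, ht⟩
    calc p (γ t - γ s) = p (γ c - γ s) + p (γ t - γ c) := by
          rw [← map_add, add_comm, sub_add_sub_cancel]
      _ ≤ (∫ τ in s..c, G (γ τ) p) + ∫ τ in c..t, G (γ τ) p :=
          add_le_add (hI.2 s hs c hIc.1 (hIc.2 hs) p) (hJ.2 c hc.1 t ht (hc.2 ht) p)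
      _ = ∫ τ in s..t, G (γ τ) p :=
          intervalIntegral.integral_add_adjacent_intervals (hint p s c) (hint p c t)
  · have hc := hJc ⟨s, hs⟩
    obtain rfl : s = c := le_antisymm (hst.trans (hIc.2 ht)) (hc.2 hs)
    obtain rfl : t = s := le_antisymm (hIc.2 ht) hst
    simp
  · exact hJ.2 s hs t ht hst p

theorem const_velocity (hG : ∀ p, Continuous (G · p)) (hI : I.OrdConnected) {y z : E}
    (hY : ∀ t ∈ I, y + t • z ∈ Y) (hz : ∀ t ∈ I, ∀ p : StrongDual ℝ E, p z ≤ G (y + t • z) p) :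
    ViableOn G Y I fun t => y + t • z := by
  refine ⟨hY, fun s hs t ht hst p => ?_⟩
  calc p (y + t • z - (y + s • z)) = ∫ _ in s..t, p z := by
        rw [add_sub_add_left_eq_sub, ← sub_smul, map_smul, intervalIntegral.integral_const]
    _ ≤ ∫ τ in s..t, G (y + τ • z) p :=
        intervalIntegral.integral_mono_on hst intervalIntegrable_const
          (((hG p).comp (by fun_prop)).intervalIntegrable _ _)
          fun τ hτ => hz τ (hI.out hs ht hτ) p

theorem of_forall_pos (hγ : Continuous γ) (hG : ∀ p, Continuous (G · p)) (hY : IsClosed Y)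
    (h : ∀ δ > 0, ViableOn (fun x p => G x p + δ * ‖p‖) (cthickening δ Y) I γ) :
    ViableOn G Y I γ := by
  refine ⟨fun t ht => ?_, fun s hs t ht hst p => ?_⟩
  · rw [← hY.closure_eq, closure_eq_iInter_cthickening]
    exact mem_iInter₂.2 fun δ hδ => (h δ hδ).1 t ht
  · have hbound (δ : ℝ) (hδ : 0 < δ) :
        p (γ t - γ s) ≤ (∫ τ in s..t, G (γ τ) p) + (t - s) * (δ * ‖p‖) := by
      refine ((h δ hδ).2 s hs t ht hst p).trans_eq ?_
      exact (intervalIntegral.integral_add (((hG p).comp hγ).intervalIntegrable _ _)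
        intervalIntegrable_const).trans (by rw [intervalIntegral.integral_const, smul_eq_mul]; rfl)
    have hlim : Tendsto (fun δ : ℝ => (∫ τ in s..t, G (γ τ) p) + (t - s) * (δ * ‖p‖)) (𝓝[>] 0)
        (𝓝 ((∫ τ in s..t, G (γ τ) p) + (t - s) * (0 * ‖p‖))) :=
      (Continuous.tendsto (by fun_prop) 0).mono_left nhdsWithin_le_nhds
    simpa using ge_of_tendsto hlim (eventually_mem_nhdsWithin.mono hbound)

theorem apply_le_of_hasDerivAt (h : ViableOn G Y I γ) (hG : ∀ p, Continuous (G · p))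
    (hγ : Continuous γ) {t : ℝ} (ht : t ∈ I) (hI : I ∈ 𝓝[>] t) {d : E} (hd : HasDerivAt γ d t)
    (p : StrongDual ℝ E) : p d ≤ G (γ t) p := by
  have hcont : Continuous fun τ => G (γ τ) p := (hG p).comp hγ
  have hderiv : HasDerivAt (fun s => (∫ τ in t..s, G (γ τ) p) - p (γ s - γ t))
      (G (γ t) p - p d) t :=
    (hcont.integral_hasStrictDerivAt t t).hasDerivAt.sub
      (p.hasFDerivAt.comp_hasDerivAt t (hd.sub_const (γ t)))
  refine sub_nonneg.1 (nonneg_of_hasDerivWithinAt_of_eventually_le hderiv.hasDerivWithinAt ?_)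
  filter_upwards [hI, self_mem_nhdsWithin] with s hs hts
  simpa using h.2 t ht s hs (mem_Ioi.1 hts).le p

end ViableOn

theorem isClosed_setOfPred_viableOn {A : Type*} [TopologicalSpace A] {φ : A → C(ℝ, E)}
    (hφ : Continuous φ) {G : E → StrongDual ℝ E → ℝ} (hG : ∀ p, Continuous (G · p)) {Y : Set E}
    (hY : IsClosed Y) {I : A → Set ℝ} (hI : ∀ t, IsOpen {a | t ∈ I a}) :
    IsClosed {a | ViableOn G Y (I a) (φ a)} := by
  have heval (t : ℝ) : Continuous fun a => φ a t := (continuous_eval_const t).comp hφ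
  have hintegral (s t : ℝ) (p : StrongDual ℝ E) : Continuous fun a => ∫ τ in s..t, G (φ a τ) p :=
    intervalIntegral.continuous_parametric_intervalIntegral_of_continuous'
      (f := fun a τ => G (φ a τ) p) ((hG p).comp
        (continuous_eval.comp ((hφ.comp continuous_fst).prodMk continuous_snd))) s t
  have hconstraint (s t : ℝ) : IsClosed {a | s ≤ t → ∀ p : StrongDual ℝ E,
      p (φ a t - φ a s) ≤ ∫ τ in s..t, G (φ a τ) p} := by
    simp only [ofPred_forall]
    exact isClosed_iInter fun _ => isClosed_iInter fun p =>
      isClosed_le (p.continuous.comp ((heval t).sub (heval s))) (hintegral s t p)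
  refine IsClosed.and ?_ ?_ <;> simp only [ofPred_forall (ι := ℝ)]
  · exact isClosed_iInter fun t => isClosed_imp (hI t) (hY.preimage (heval t))
  · refine isClosed_iInter fun s => isClosed_imp (hI s) ?_
    simp only [ofPred_forall (ι := ℝ)]
    exact isClosed_iInter fun t => isClosed_imp (hI t) (hconstraint s t)

end Viability

section RelaxedPaths

variable {E : Type*} [NormedAddCommGroup E]

theorem exp_neg_mul_le_one {β t : ℝ} (hβ : 0 ≤ β) (ht : 0 ≤ t) : Real.exp (-β * t) ≤ 1 :=
  Real.exp_le_one_iff.2 (by rw [neg_mul]; exact neg_nonpos.2 (mul_nonneg hβ ht))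

/-- The lifetime of a path killed at level `a`: the level stands for the killing time `τ` with
`a = e^{-βτ}`, so that `a = 0` means that the path is never killed. -/
def lifetime (β a : ℝ) : Set ℝ := {t | 0 ≤ t ∧ a < Real.exp (-β * t)}

theorem lifetime_zero (β : ℝ) : lifetime β 0 = Ici 0 := by
  ext t
  simp [lifetime, Real.exp_pos]

theorem lifetime_one {β : ℝ} (hβ : 0 ≤ β) : lifetime β 1 = ∅ :=
  eq_empty_of_forall_notMem fun _ ht => ht.2.not_ge (exp_neg_mul_le_one hβ ht.1)

theorem zero_mem_lifetime {β a t : ℝ} (hβ : 0 ≤ β) (ht : t ∈ lifetime β a) : 0 ∈ lifetime β a := by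
  refine ⟨le_rfl, ht.2.trans_le ?_⟩
  rw [mul_zero, Real.exp_zero]
  exact exp_neg_mul_le_one hβ ht.1

theorem ordConnected_lifetime {β : ℝ} (hβ : 0 ≤ β) (a : ℝ) : (lifetime β a).OrdConnected :=
  ⟨fun _ hs _ ht _ hr => ⟨hs.1.trans hr.1, ht.2.trans_le
    (Real.exp_le_exp.2 (mul_le_mul_of_nonpos_left hr.2 (neg_nonpos.2 hβ)))⟩⟩

theorem lifetime_exp_mul_subset (β a h : ℝ) :
    lifetime β (Real.exp (-β * h) * a) ⊆ Icc 0 h ∪ (· - h) ⁻¹' lifetime β a := by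
  rintro t ⟨ht, hat⟩
  refine (le_total t h).imp (fun hth => ⟨ht, hth⟩) fun hht => ⟨sub_nonneg.2 hht, ?_⟩
  have hexp : Real.exp (-β * t) = Real.exp (-β * h) * Real.exp (-β * (t - h)) := by
    rw [← Real.exp_add, mul_sub, add_sub_cancel]
  exact lt_of_mul_lt_mul_left (hexp ▸ hat) (Real.exp_pos _).le

/-- The path which runs with constant velocity `z` until time `h` and then follows `γ`. -/
def prependSegment [NormedSpace ℝ E] (γ : C(ℝ, E)) (z : E) (h : ℝ) : C(ℝ, E) where
  toFun t := γ (max (t - h) 0) + min (t - h) 0 • z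
  continuous_toFun := by fun_prop

variable [NormedSpace ℝ E] {H : E → StrongDual ℝ E → ℝ} {X B : Set E} {M : ℝ≥0} {β δ h : ℝ}

theorem prependSegment_of_le (γ : C(ℝ, E)) (z : E) {t : ℝ} (ht : t ≤ h) :
    prependSegment γ z h t = γ 0 - h • z + t • z := by
  rw [prependSegment, ContinuousMap.coe_mk, max_eq_right (sub_nonpos.2 ht),
    min_eq_left (sub_nonpos.2 ht)]
  module

theorem prependSegment_of_ge (γ : C(ℝ, E)) (z : E) {t : ℝ} (ht : h ≤ t) :
    prependSegment γ z h t = γ (t - h) := by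
  rw [prependSegment, ContinuousMap.coe_mk, max_eq_left (sub_nonneg.2 ht),
    min_eq_right (sub_nonneg.2 ht), zero_smul, add_zero]

theorem lipschitzWith_prependSegment {γ : C(ℝ, E)} (hγ : LipschitzWith M γ) {z : E}
    (hz : ‖z‖ ≤ M) (h : ℝ) : LipschitzWith M (prependSegment γ z h) := by
  refine LipschitzWith.of_dist_le_mul fun s t => ?_
  wlog hst : s ≤ t generalizing s t
  · rw [dist_comm, dist_comm s]
    exact this t s (le_of_not_ge hst)
  have hmax : max (s - h) 0 ≤ max (t - h) 0 := max_le_max_right 0 (sub_le_sub_right hst h)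
  have hmin : min (s - h) 0 ≤ min (t - h) 0 := min_le_min_right 0 (sub_le_sub_right hst h)
  calc dist (prependSegment γ z h s) (prependSegment γ z h t)
      ≤ dist (γ (max (s - h) 0)) (γ (max (t - h) 0)) +
          dist (min (s - h) 0 • z) (min (t - h) 0 • z) := dist_add_add_le _ _ _ _
    _ ≤ M * (max (t - h) 0 - max (s - h) 0) + (min (t - h) 0 - min (s - h) 0) * M := by
        refine add_le_add ((hγ.dist_le_mul _ _).trans_eq ?_) ?_
        · rw [dist_comm, Real.dist_eq, abs_of_nonneg (sub_nonneg.2 hmax)]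
        · rw [dist_comm, dist_eq_norm, ← sub_smul, norm_smul,
            Real.norm_of_nonneg (sub_nonneg.2 hmin)]
          exact mul_le_mul_of_nonneg_left hz (sub_nonneg.2 hmin)
    _ = M * (t - s) := by
        linear_combination (M : ℝ) * (max_add_min (t - h) 0 - max_add_min (s - h) 0)
    _ = M * dist s t := by rw [dist_comm, Real.dist_eq, abs_of_nonneg (sub_nonneg.2 hst)]

/-- Pairs `(γ, a)` of an `M`-Lipschitz path `γ` and a killing level `a` such that, during its
lifetime, `γ` satisfies the viability constraints for `H` and `X` up to an error `δ`. -/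
def relaxedPaths (H : E → StrongDual ℝ E → ℝ) (X : Set E) (M : ℝ≥0) (β δ : ℝ) :
    Set (C(ℝ, E) × ℝ) :=
  {q | q.2 ∈ Icc 0 1 ∧ LipschitzWith M q.1 ∧
    ViableOn (fun x p => H x p + δ * ‖p‖) (cthickening δ X) (lifetime β q.2) q.1}

/-- The `M`-Lipschitz paths that satisfy the viability constraints for `H` and `X` at all
nonnegative times. -/
def viablePaths (H : E → StrongDual ℝ E → ℝ) (X : Set E) (M : ℝ≥0) : Set C(ℝ, E) :=
  {γ | LipschitzWith M γ ∧ ViableOn H X (Ici 0) γ}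

theorem relaxedPaths_mono (hH : ∀ p, Continuous (H · p)) {δ' : ℝ} (hδ : δ ≤ δ') :
    relaxedPaths H X M β δ ⊆ relaxedPaths H X M β δ' := fun q ⟨ha, hL, hv⟩ =>
  ⟨ha, hL, hv.mono q.1.continuous (fun p => (hH p).add_const _) (fun p => (hH p).add_const _)
    (cthickening_mono hδ X) (fun _ _ => by gcongr) Subset.rfl⟩

theorem const_mem_relaxedPaths (hβ : 0 ≤ β) (y : E) :
    (ContinuousMap.const ℝ y, (1 : ℝ)) ∈ relaxedPaths H X M β δ := by
  refine ⟨by simp, LipschitzWith.const' y, ?_⟩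
  simp [ViableOn, lifetime_one hβ]

theorem mem_viablePaths_of_forall_mem_relaxedPaths (hH : ∀ p, Continuous (H · p))
    (hX : IsClosed X) {γ : C(ℝ, E)} (hγ : ∀ δ > 0, (γ, (0 : ℝ)) ∈ relaxedPaths H X M β δ) :
    γ ∈ viablePaths H X M :=
  ⟨(hγ 1 one_pos).2.1, .of_forall_pos γ.continuous hH hX fun δ hδ =>
    lifetime_zero β ▸ (hγ δ hδ).2.2⟩

theorem prependSegment_mem_relaxedPaths (hβ : 0 ≤ β) (hH : ∀ p, Continuous (H · p))
    {γ : C(ℝ, E)} {a : ℝ} (hγ : (γ, a) ∈ relaxedPaths H X M β δ) {y z : E} (hy : γ 0 = y + h • z)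
    (hz : ‖z‖ ≤ M) (hh : 0 ≤ h) (hX : ∀ t ∈ Icc 0 h, y + t • z ∈ cthickening δ X)
    (hvel : ∀ t ∈ Icc 0 h, ∀ p : StrongDual ℝ E, p z ≤ H (y + t • z) p + δ * ‖p‖) :
    (prependSegment γ z h, Real.exp (-β * h) * a) ∈ relaxedPaths H X M β δ := by
  obtain ⟨ha, hL, hv⟩ := hγ
  have hG : ∀ p, Continuous fun x => H x p + δ * ‖p‖ := fun p => (hH p).add_const _
  have hsegment : EqOn (fun t => y + t • z) (prependSegment γ z h) (Icc 0 h) := fun t ht => by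
    simp [prependSegment_of_le γ z ht.2, hy]
  have hshift : EqOn (fun t => γ (t - h)) (prependSegment γ z h) ((· - h) ⁻¹' lifetime β a) :=
    fun t ht => (prependSegment_of_ge γ z (sub_nonneg.1 ht.1)).symm
  have hearly := (ViableOn.const_velocity hG ordConnected_Icc hX hvel).congr ordConnected_Icc
    hsegment
  have hlate := (hv.comp_sub_right h).congr
    ((ordConnected_lifetime hβ a).preimage_mono fun _ _ hst => sub_le_sub_right hst h) hshift
  have hleast (hne : ((· - h) ⁻¹' lifetime β a).Nonempty) :
      IsLeast ((· - h) ⁻¹' lifetime β a) h := by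
    obtain ⟨t, ht⟩ := hne
    exact ⟨by simpa using zero_mem_lifetime hβ ht, fun s hs => sub_nonneg.1 hs.1⟩
  exact ⟨⟨mul_nonneg (Real.exp_pos _).le ha.1,
      mul_le_one₀ (exp_neg_mul_le_one hβ hh) ha.1 ha.2⟩,
    lipschitzWith_prependSegment hL hz h, (hearly.union hlate (prependSegment γ z h).continuous hG
      (isGreatest_Icc hh) hleast).mono (prependSegment γ z h).continuous hG hG Subset.rfl
      (fun _ _ => le_rfl) (lifetime_exp_mul_subset β a h)⟩

theorem isClosed_relaxedPaths (hH : ∀ p, Continuous (H · p)) :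
    IsClosed (relaxedPaths H X M β δ) := by
  refine (isClosed_Icc.preimage continuous_snd).and <| IsClosed.and
    ((isClosed_setOfPred_lipschitzWith M).preimage (continuous_coeFun.comp continuous_fst)) <|
    isClosed_setOfPred_viableOn continuous_fst (fun p => (hH p).add_const _)
      isClosed_cthickening fun t => ?_
  exact isOpen_const.and (isOpen_lt continuous_snd continuous_const)

theorem isCompact_setOfPred_mem_relaxedPaths [ProperSpace E] (hH : ∀ p, Continuous (H · p))
    (hB : IsCompact B) : IsCompact {q | q ∈ relaxedPaths H X M β δ ∧ q.1 0 ∈ B} := by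
  refine ((isCompact_setOfPred_lipschitzWith hB M).prod
    (isCompact_Icc (a := (0 : ℝ)) (b := 1))).of_isClosed_subset
    ((isClosed_relaxedPaths hH).and (hB.isClosed.preimage
      ((continuous_eval_const (0 : ℝ)).comp continuous_fst))) ?_
  exact fun q ⟨⟨ha, hL, _⟩, h0⟩ => ⟨⟨hL, h0⟩, ha⟩

theorem isCompact_viablePaths [ProperSpace E] (hH : ∀ p, Continuous (H · p))
    (hX : IsCompact X) : IsCompact (viablePaths H X M) := by
  refine (isCompact_setOfPred_lipschitzWith hX M).of_isClosed_subset
    (((isClosed_setOfPred_lipschitzWith M).preimage continuous_coeFun).and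
      (isClosed_setOfPred_viableOn continuous_id hH hX.isClosed fun t => isOpen_const)) ?_
  exact fun γ ⟨hL, hv⟩ => ⟨hL, hv.1 0 self_mem_Ici⟩

end RelaxedPaths

section PenalizedCost

/-- The discounted cost of a path with a killing level `a`, where being killed costs `a / δ`. -/
noncomputable def penalizedCost {E : Type*} [TopologicalSpace E] (β δ : ℝ) (g : E → ℝ)
    (q : C(ℝ, E) × ℝ) : ℝ :=
  discountedCost β g q.1 + q.2 / δ

theorem continuous_penalizedCost {E : Type*} [PseudoMetricSpace E] {β : ℝ} (hβ : 0 < β) (δ : ℝ)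
    (g : E →ᵇ ℝ) : Continuous (penalizedCost β δ g) :=
  ((continuous_discountedCost hβ g).comp continuous_fst).add (continuous_snd.div_const δ)

variable {E : Type*} [TopologicalSpace E] {β δ : ℝ} {g : E → ℝ}

theorem penalizedCost_antitone {δ' : ℝ} (hδ : 0 < δ) (hδ' : δ ≤ δ') {q : C(ℝ, E) × ℝ}
    (hq : 0 ≤ q.2) : penalizedCost β δ' g q ≤ penalizedCost β δ g q :=
  add_le_add_right (div_le_div_of_nonneg_left hq hδ hδ') _

theorem eq_zero_of_forall_penalizedCost_le {q : C(ℝ, E) × ℝ} (hq : 0 ≤ q.2) {c : ℝ}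
    (hc : ∀ δ > 0, penalizedCost β δ g q ≤ c) : q.2 = 0 := by
  by_contra hne
  have hpos : 0 < q.2 := lt_of_le_of_ne' hq hne
  have hbound := hc (q.2 / (|c - discountedCost β g q.1| + 1)) (div_pos hpos (by positivity))
  rw [penalizedCost, div_div_cancel₀ hne] at hbound
  linarith [le_abs_self (c - discountedCost β g q.1)]

end PenalizedCost

section ValueFunction

variable {E : Type*} [NormedAddCommGroup E] [NormedSpace ℝ E] {β δ : ℝ} {g : E →ᵇ ℝ}

/-- The value function of the control problem over relaxed paths with penalized killing. -/
noncomputable def valueFunction (H : E → StrongDual ℝ E → ℝ) (X : Set E) (M : ℝ≥0) (β δ : ℝ)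
    (g : E → ℝ) (y : E) : ℝ :=
  sInf (penalizedCost β δ g '' {q | q ∈ relaxedPaths H X M β δ ∧ q.1 0 ∈ ({y} : Set E)})

variable {H : E → StrongDual ℝ E → ℝ} {X : Set E} {M : ℝ≥0}

theorem isLeast_valueFunction [ProperSpace E] (hβ : 0 < β) (hH : ∀ p, Continuous (H · p)) (y : E) :
    IsLeast (penalizedCost β δ g '' {q | q ∈ relaxedPaths H X M β δ ∧ q.1 0 ∈ ({y} : Set E)})
      (valueFunction H X M β δ g y) :=
  ((isCompact_setOfPred_mem_relaxedPaths hH isCompact_singleton).image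
    (continuous_penalizedCost hβ _ _)).isLeast_sInf
    (Nonempty.image _ ⟨_, const_mem_relaxedPaths hβ.le y, rfl⟩)

theorem exists_penalizedCost_eq_valueFunction [ProperSpace E] (hβ : 0 < β)
    (hH : ∀ p, Continuous (H · p)) (y : E) :
    ∃ q ∈ relaxedPaths H X M β δ, q.1 0 = y ∧
      penalizedCost β δ g q = valueFunction H X M β δ g y := by
  obtain ⟨q, ⟨hq, hq0⟩, hcost⟩ := (isLeast_valueFunction hβ hH y).1
  exact ⟨q, hq, hq0, hcost⟩

theorem valueFunction_le [ProperSpace E] (hβ : 0 < β) (hH : ∀ p, Continuous (H · p))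
    {q : C(ℝ, E) × ℝ} (hq : q ∈ relaxedPaths H X M β δ) :
    valueFunction H X M β δ g (q.1 0) ≤ penalizedCost β δ g q :=
  (isLeast_valueFunction hβ hH (q.1 0)).2 ⟨q, ⟨hq, rfl⟩, rfl⟩

theorem abs_valueFunction_le [ProperSpace E] (hβ : 0 < β) (hδ : 0 ≤ δ)
    (hH : ∀ p, Continuous (H · p)) (y : E) :
    |valueFunction H X M β δ g y| ≤ ‖g‖ / β + 1 / δ := by
  obtain ⟨q, hq, -, hcost⟩ :=
    exists_penalizedCost_eq_valueFunction (g := g) (X := X) (M := M) (δ := δ) hβ hH y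
  rw [← hcost]
  refine (abs_add_le _ _).trans (add_le_add (abs_discountedCost_le hβ g q.1) ?_)
  rw [abs_of_nonneg (div_nonneg hq.1.1 hδ)]
  exact div_le_div_of_nonneg_right hq.1.2 hδ

theorem measurable_valueFunction [ProperSpace E] [MeasurableSpace E] [BorelSpace E] (hβ : 0 < β)
    (hH : ∀ p, Continuous (H · p)) : Measurable (valueFunction H X M β δ g) := by
  refine measurable_of_Iic fun b => ?_
  have hsublevel : valueFunction H X M β δ g ⁻¹' Iic b = ⋃ k : ℕ,
      (fun q : C(ℝ, E) × ℝ => q.1 0) ''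
        ({q | q ∈ relaxedPaths H X M β δ ∧ q.1 0 ∈ closedBall 0 k} ∩
          {q | penalizedCost β δ g q ≤ b}) := by
    ext y
    simp only [mem_preimage, mem_Iic, mem_iUnion]
    constructor
    · intro hy
      obtain ⟨q, hq, rfl, hcost⟩ :=
        exists_penalizedCost_eq_valueFunction (g := g) (X := X) (M := M) (δ := δ) hβ hH y
      obtain ⟨k, hk⟩ := exists_nat_ge ‖q.1 0‖
      exact ⟨k, q, ⟨⟨hq, mem_closedBall_zero_iff.2 hk⟩, hcost.trans_le hy⟩, rfl⟩
    · rintro ⟨k, q, ⟨⟨hq, -⟩, hb⟩, rfl⟩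
      exact (valueFunction_le hβ hH hq).trans hb
  rw [hsublevel]
  exact .iUnion fun k => (((isCompact_setOfPred_mem_relaxedPaths hH
    (isCompact_closedBall _ _)).inter_right (isClosed_le (continuous_penalizedCost hβ _ _)
    continuous_const)).image ((continuous_eval_const 0).comp continuous_fst)).measurableSet

theorem valueFunction_sub_le_of_segment [ProperSpace E] (hβ : 0 < β)
    (hH : ∀ p, Continuous (H · p)) {y z : E} (hz : ‖z‖ ≤ M) {h c : ℝ} (hh : 0 ≤ h)
    (hX : ∀ t ∈ Icc 0 h, y + t • z ∈ cthickening δ X)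
    (hvel : ∀ t ∈ Icc 0 h, ∀ p : StrongDual ℝ E, p z ≤ H (y + t • z) p + δ * ‖p‖)
    (hg : ∀ t ∈ Icc 0 h, g (y + t • z) ≤ c) :
    valueFunction H X M β δ g y - c / β ≤
      Real.exp (-β * h) * (valueFunction H X M β δ g (y + h • z) - c / β) := by
  obtain ⟨⟨γ, a⟩, hq, hq0, hcost⟩ :=
    exists_penalizedCost_eq_valueFunction (g := g) (X := X) (M := M) (δ := δ) hβ hH (y + h • z)
  have hsegment : ∀ t ≤ h, prependSegment γ z h t = y + t • z := fun t ht => by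
    simp only [prependSegment_of_le γ z ht, show γ 0 = y + h • z from hq0, add_sub_cancel_right]
  have hvalue := valueFunction_le (g := g) hβ hH
    (prependSegment_mem_relaxedPaths hβ.le hH hq hq0 hz hh hX hvel)
  rw [hsegment 0 hh, zero_smul, add_zero] at hvalue
  have hdiscount := discountedCost_sub_le_of_shift hβ g (γ := γ) (c := c) γ.continuous
    (prependSegment γ z h).continuous hh
    (fun t ht => by rw [prependSegment_of_ge γ z (by linarith), add_sub_cancel_right])
    (fun t ht => by rw [hsegment t ht.2]; exact hg t ht)
  rw [← hcost]
  simp only [penalizedCost] at hvalue ⊢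
  linear_combination hvalue + hdiscount

theorem exists_forall_neg_lt_add_penalizedCost [ProperSpace E] (hβ : 0 < β)
    (hH : ∀ p, Continuous (H · p)) (hX : IsCompact X) {w : E → ℝ} (hw : Continuous w)
    (hcost : ∀ γ ∈ viablePaths H X M, 0 ≤ w (γ 0) + discountedCost β g γ) {ε : ℝ} (hε : 0 < ε) :
    ∃ δ > 0, ∀ q ∈ relaxedPaths H X M β δ, q.1 0 ∈ cthickening δ X →
      -ε < w (q.1 0) + penalizedCost β δ g q := by
  by_contra! hcon
  let S (δ : {δ : ℝ // 0 < δ}) : Set (C(ℝ, E) × ℝ) :=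
    {q | q ∈ relaxedPaths H X M β δ ∧ q.1 0 ∈ cthickening δ X} ∩
      {q | w (q.1 0) + penalizedCost β δ g q ≤ -ε}
  have hcompact (δ) : IsCompact (S δ) :=
    (isCompact_setOfPred_mem_relaxedPaths hH hX.cthickening).inter_right (isClosed_le
      ((hw.comp ((continuous_eval_const (0 : ℝ)).comp continuous_fst)).add
        (continuous_penalizedCost hβ _ _)) continuous_const)
  have hnonempty (δ) : (S δ).Nonempty := by
    obtain ⟨q, hq, hq0, hqε⟩ := hcon δ δ.2
    exact ⟨q, ⟨hq, hq0⟩, hqε⟩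
  have hmono : Monotone S := fun δ δ' hδ q hq =>
    ⟨⟨relaxedPaths_mono hH hδ hq.1.1, cthickening_mono hδ X hq.1.2⟩,
      (add_le_add_right (penalizedCost_antitone δ.2 hδ hq.1.1.1.1) _).trans hq.2⟩
  have : Nonempty {δ : ℝ // 0 < δ} := ⟨⟨1, one_pos⟩⟩
  obtain ⟨⟨γ, a⟩, hγ⟩ := IsCompact.nonempty_iInter_of_directed_nonempty_isCompact_isClosed S
    hmono.directed_ge hnonempty hcompact fun δ => (hcompact δ).isClosed
  have hγS (δ : ℝ) (hδ : 0 < δ) : (γ, a) ∈ S ⟨δ, hδ⟩ := mem_iInter.1 hγ ⟨δ, hδ⟩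
  have hbound (δ : ℝ) (hδ : 0 < δ) : penalizedCost β δ g (γ, a) ≤ -ε - w (γ 0) :=
    le_sub_iff_add_le'.2 (hγS δ hδ).2
  obtain rfl : a = 0 :=
    eq_zero_of_forall_penalizedCost_le (hγS 1 one_pos).1.1.1.1 hbound
  have hviable := mem_viablePaths_of_forall_mem_relaxedPaths hH hX.isClosed
    fun δ hδ => (hγS δ hδ).1.1
  have hbound₁ := hbound 1 one_pos
  rw [penalizedCost, zero_div, add_zero] at hbound₁
  linarith [hcost γ hviable]

end ValueFunction

section Mollification

variable {E : Type*} [NormedAddCommGroup E] [NormedSpace ℝ E]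

theorem exists_mollifier [FiniteDimensional ℝ E] [MeasurableSpace E] [BorelSpace E] {r : ℝ}
    (hr : 0 < r) : ∃ P : Measure E, IsProbabilityMeasure P ∧ (∀ᵐ z ∂P, z ∈ ball 0 r) ∧
      ∀ V : E → ℝ, LocallyIntegrable V Measure.addHaar →
        ContDiff ℝ 1 fun x => ∫ z, V (x - z) ∂P := by
  let φ : ContDiffBump (0 : E) := ⟨r / 2, r, half_pos hr, half_lt_self hr⟩
  let ρ : E → ℝ := φ.normed Measure.addHaar
  have hρ : Measurable fun z => ENNReal.ofReal (ρ z) :=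
    φ.continuous_normed.measurable.ennreal_ofReal
  refine ⟨Measure.addHaar.withDensity fun z => ENNReal.ofReal (ρ z), ⟨?_⟩, ?_, fun V hV => ?_⟩
  · rw [withDensity_apply _ .univ, setLIntegral_univ, ← ofReal_integral_eq_lintegral_ofReal
      φ.integrable_normed (ae_of_all _ φ.nonneg_normed), φ.integral_normed, ENNReal.ofReal_one]
  · rw [ae_withDensity_iff hρ]
    refine ae_of_all _ fun z hz => ?_
    have hz' : z ∈ Function.support ρ := fun h => hz (by rw [h, ENNReal.ofReal_zero])
    rwa [φ.support_normed_eq] at hz'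
  · have hconv : (fun x => ∫ z, V (x - z) ∂Measure.addHaar.withDensity fun z =>
        ENNReal.ofReal (ρ z)) =
        convolution ρ V (ContinuousLinearMap.lsmul ℝ ℝ) Measure.addHaar := by
      funext x
      rw [integral_withDensity_eq_integral_toReal_smul hρ
        (ae_of_all _ fun _ => ENNReal.ofReal_lt_top)]
      simp only [ENNReal.toReal_ofReal (φ.nonneg_normed _), ρ]
      rfl
    rw [hconv]
    exact φ.hasCompactSupport_normed.contDiff_convolution_left _ φ.contDiff_normed hV

theorem mul_sub_le_fderiv_of_eventually_le {v : E → ℝ} {x z : E} (hv : DifferentiableAt ℝ v x)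
    {β k : ℝ}
    (hle : ∀ᶠ h in 𝓝[>] (0 : ℝ), v x - k ≤ Real.exp (-β * h) * (v (x + h • z) - k)) :
    β * (v x - k) ≤ fderiv ℝ v x z := by
  have hline : HasDerivAt (fun h : ℝ => x + h • z) z 0 := by
    simpa using ((hasDerivAt_id (0 : ℝ)).smul_const z).const_add x
  have hvline : HasDerivAt (fun h : ℝ => v (x + h • z)) (fderiv ℝ v x z) 0 :=
    HasFDerivAt.comp_hasDerivAt 0 (by simpa using hv.hasFDerivAt) hline
  have hexp : HasDerivAt (fun h : ℝ => Real.exp (-β * h)) (-β) 0 := by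
    simpa using ((hasDerivAt_id (0 : ℝ)).const_mul (-β)).exp
  have hnonneg := nonneg_of_hasDerivWithinAt_of_eventually_le
    (hexp.mul (hvline.sub_const k)).hasDerivWithinAt (by simpa using hle)
  simp only [zero_smul, add_zero, mul_zero, Real.exp_zero, one_mul] at hnonneg
  linarith

variable [FiniteDimensional ℝ E] [MeasurableSpace E] [BorelSpace E]

theorem exists_contDiff_of_dynamicProgramming {V : E → ℝ} (hV : Measurable V) {C : ℝ}
    (hC : ∀ x, |V x| ≤ C) (β : ℝ) {r : ℝ} (hr : 0 < r) :
    ∃ v : E → ℝ, ContDiff ℝ 1 v ∧ (∀ x b, (∀ y ∈ ball x r, b ≤ V y) → b ≤ v x) ∧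
      ∀ x z k, (∀ᶠ h in 𝓝[>] (0 : ℝ), ∀ y ∈ ball x r,
        V y - k ≤ Real.exp (-β * h) * (V (y + h • z) - k)) → β * (v x - k) ≤ fderiv ℝ v x z := by
  obtain ⟨P, _, hP, hsmooth⟩ := exists_mollifier (E := E) hr
  have hcontDiff := hsmooth V ((memLp_top_of_bound hV.aestronglyMeasurable C
    (ae_of_all _ hC)).locallyIntegrable le_top)
  have hint (x : E) : Integrable (fun z => V (x - z)) P :=
    .of_bound (hV.comp (measurable_const.sub measurable_id)).aestronglyMeasurable C
      (ae_of_all _ fun z => hC _)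
  have hball (x : E) : ∀ᵐ z ∂P, x - z ∈ ball x r :=
    hP.mono fun z hz => by simpa [mem_ball_iff_norm] using hz
  refine ⟨_, hcontDiff, fun x b hb => ?_, fun x z k hdpp =>
    mul_sub_le_fderiv_of_eventually_le (hcontDiff.differentiable one_ne_zero x) ?_⟩
  · have hmean := integral_mono_ae (integrable_const b) (hint x) ((hball x).mono fun z => hb _)
    rwa [integral_const, probReal_univ, one_smul] at hmean
  · filter_upwards [hdpp] with h hh
    have hmean := integral_mono_ae ((hint x).sub (integrable_const k))
      (((hint (x + h • z)).sub (integrable_const k)).const_mul (Real.exp (-β * h)))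
      ((hball x).mono fun ζ hζ => by simpa [sub_add_eq_add_sub] using hh _ hζ)
    simpa [integral_sub (hint _) (integrable_const k), integral_const_mul] using hmean

end Mollification

section Subsolution

variable {E : Type*} [NormedAddCommGroup E] [NormedSpace ℝ E]
variable {H : E → StrongDual ℝ E → ℝ} {X : Set E} {M : ℝ≥0} {β δ r ε : ℝ} {g : E →ᵇ ℝ}

theorem exists_ball_modulus (hX : IsCompact X) {w : E → ℝ} (hw : Continuous w) (g : E →ᵇ ℝ)
    (hHX : ∀ δ > 0, ∀ᶠ q : E × E in uniformity E, q.1 ∈ X → ∀ p, H q.1 p ≤ H q.2 p + δ * ‖p‖)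
    (hδ : 0 < δ) (hε : 0 < ε) :
    ∃ r > 0, ∀ x ∈ X, ∀ y ∈ ball x r, y ∈ cthickening δ X ∧
      (∀ p, H x p ≤ H y p + δ * ‖p‖) ∧ g y ≤ g x + ε ∧ w y ≤ w x + ε := by
  have hmodulus {φ : E → ℝ} (hφ : Continuous φ) :
      ∀ᶠ q : E × E in uniformity E, q.1 ∈ X → φ q.2 ≤ φ q.1 + ε :=
    mem_of_superset (hX.uniformContinuousAt_of_continuousAt φ (fun x _ => hφ.continuousAt)
      (dist_mem_uniformity hε)) fun q hq hqX => by
        have hdist : |φ q.1 - φ q.2| < ε := hq hqX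
        linarith [(abs_lt.1 hdist).1]
  obtain ⟨r, hr, hball⟩ := mem_uniformity_dist.1 ((hHX δ hδ).and
    ((hmodulus g.continuous).and ((hmodulus hw).and (dist_mem_uniformity hδ))))
  refine ⟨r, hr, fun x hx y hy => ?_⟩
  obtain ⟨hHxy, hgxy, hwxy, hdist⟩ := hball (mem_ball'.1 hy)
  exact ⟨mem_cthickening_of_dist_le y x δ X hx (dist_comm x y ▸ hdist.le), hHxy hx, hgxy hx,
    hwxy hx⟩

variable [FiniteDimensional ℝ E]

theorem eventually_valueFunction_sub_le (hβ : 0 < β) (hH : ∀ p, Continuous (H · p)) {x z : E}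
    (hz : ‖z‖ ≤ M) {c : ℝ} (hr : 0 < r)
    (hx : ∀ y ∈ ball x (r + r), y ∈ cthickening δ X ∧
      (∀ p : StrongDual ℝ E, p z ≤ H y p + δ * ‖p‖) ∧ g y ≤ c) :
    ∀ᶠ h in 𝓝[>] (0 : ℝ), ∀ y ∈ ball x r, valueFunction H X M β δ g y - c / β ≤
      Real.exp (-β * h) * (valueFunction H X M β δ g (y + h • z) - c / β) := by
  have : ProperSpace E := FiniteDimensional.proper_real E
  have hsmall : ∀ᶠ h in 𝓝[>] (0 : ℝ), h * M < r := by
    have hlim : Tendsto (fun h : ℝ => h * M) (𝓝[>] 0) (𝓝 (0 * M)) :=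
      (continuous_mul_const (M : ℝ)).continuousWithinAt
    exact hlim.eventually_lt_const (by simpa using hr)
  filter_upwards [hsmall, self_mem_nhdsWithin] with h hhM hh y hy
  have hsegment : ∀ t ∈ Icc 0 h, y + t • z ∈ ball x (r + r) := fun t ht => by
    have hnorm : ‖t • z‖ < r := by
      rw [norm_smul, Real.norm_of_nonneg ht.1]
      exact (mul_le_mul ht.2 hz (norm_nonneg z) hh.le).trans_lt hhM
    rw [mem_ball_iff_norm, add_sub_right_comm]
    exact (norm_add_le _ _).trans_lt (add_lt_add (mem_ball_iff_norm.1 hy) hnorm)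
  exact valueFunction_sub_le_of_segment hβ hH hz hh.le (fun t ht => (hx _ (hsegment t ht)).1)
    (fun t ht => (hx _ (hsegment t ht)).2.1) fun t ht => (hx _ (hsegment t ht)).2.2

theorem exists_contDiff_subsolution (hβ : 0 < β) (hX : IsCompact X)
    (hH : ∀ p, Continuous (H · p))
    (hHX : ∀ δ > 0, ∀ᶠ q : E × E in uniformity E, q.1 ∈ X → ∀ p, H q.1 p ≤ H q.2 p + δ * ‖p‖)
    {w : E → ℝ} (hw : Continuous w)
    (hcost : ∀ γ ∈ viablePaths H X M, 0 ≤ w (γ 0) + discountedCost β g γ) (hε : 0 < ε) :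
    ∃ v : E → ℝ, ContDiff ℝ 1 v ∧ (∀ x ∈ X, -w x - ε ≤ v x) ∧
      ∀ x ∈ X, ∀ z : E, ‖z‖ ≤ M → (∀ p : StrongDual ℝ E, p z ≤ H x p) →
        β * v x - fderiv ℝ v x z ≤ g x + ε := by
  have : ProperSpace E := FiniteDimensional.proper_real E
  let _ : MeasurableSpace E := borel E
  have : BorelSpace E := ⟨rfl⟩
  obtain ⟨δ, hδ, hpenalized⟩ :=
    exists_forall_neg_lt_add_penalizedCost hβ hH hX hw hcost (half_pos hε)
  obtain ⟨r, hr, hball⟩ := exists_ball_modulus hX hw g hHX hδ (half_pos hε)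
  obtain ⟨v, hv, hlower, hsub⟩ := exists_contDiff_of_dynamicProgramming
    (measurable_valueFunction (g := g) (X := X) (M := M) (δ := δ) hβ hH)
    (abs_valueFunction_le hβ hδ.le hH) β (half_pos hr)
  refine ⟨v, hv, fun x hx => hlower x _ fun y hy => ?_, fun x hx z hz hzH => ?_⟩
  · obtain ⟨hyX, -, -, hwy⟩ := hball x hx y (ball_subset_ball (half_le_self hr.le) hy)
    obtain ⟨q, hq, rfl, hvalue⟩ :=
      exists_penalizedCost_eq_valueFunction (g := g) (X := X) (M := M) (δ := δ) hβ hH y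
    linarith [hpenalized q hq hyX]
  · have hdpp := hsub x z ((g x + ε) / β) <|
      eventually_valueFunction_sub_le hβ hH hz (half_pos hr) fun y hy => by
        obtain ⟨hyX, hHy, hgy, -⟩ := hball x hx y (by rwa [add_halves] at hy)
        exact ⟨hyX, fun p => (hzH p).trans (hHy p), by linarith⟩
    rw [mul_sub, mul_div_cancel₀ _ hβ.ne'] at hdpp
    linarith

end Subsolution

section RelaxedTrajectories

variable {E F : Type*} [NormedAddCommGroup E] [NormedSpace ℝ E]

/-- A solution `x` of the convexified differential inclusion `x' ∈ conv f(x, U)` on `[0, ∞)` that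
stays in `X`. Local absolute continuity is expressed by writing `x` as the integral of a locally
integrable velocity `d`. -/
def IsRelaxedTrajectory (X : Set E) (U : Set F) (f : E → F → E) (x : ℝ → E) : Prop :=
  (∀ t, 0 ≤ t → x t ∈ X) ∧
  ∃ d : ℝ → E,
    (∀ t, 0 ≤ t → IntervalIntegrable d volume 0 t) ∧
    (∀ t, 0 ≤ t → x t = x 0 + ∫ s in (0 : ℝ)..t, d s) ∧
    ∀ᵐ t ∂(volume.restrict (Ici (0 : ℝ))), d t ∈ convexHull ℝ (f (x t) '' U)

/-- The support function `p ↦ sup {p (f x u) | u ∈ U}` of the set of velocities available at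
`x`. -/
noncomputable def velocitySupport (f : E → F → E) (U : Set F) (x : E) (p : StrongDual ℝ E) : ℝ :=
  sSup ((fun u => p (f x u)) '' U)

variable [TopologicalSpace F] {f : E → F → E} {U : Set F} {X : Set E}

theorem continuous_velocitySupport (hU : IsCompact U)
    (hf : Continuous fun q : E × F => f q.1 q.2) (p : StrongDual ℝ E) :
    Continuous (velocitySupport f U · p) :=
  hU.continuous_sSup (p.continuous.comp hf)

theorem apply_le_velocitySupport (hU : IsCompact U) (hf : Continuous fun q : E × F => f q.1 q.2)
    {u : F} (hu : u ∈ U) (x : E) (p : StrongDual ℝ E) : p (f x u) ≤ velocitySupport f U x p :=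
  le_csSup (hU.image (p.continuous.comp (hf.comp (.prodMk_right x)))).bddAbove
    (mem_image_of_mem _ hu)

theorem eventually_velocitySupport_le (hX : IsCompact X) (hU : IsCompact U) (hUne : U.Nonempty)
    (hf : Continuous fun q : E × F => f q.1 q.2) {δ : ℝ} (hδ : 0 < δ) :
    ∀ᶠ q : E × E in uniformity E, q.1 ∈ X → ∀ p : StrongDual ℝ E,
      velocitySupport f U q.1 p ≤ velocitySupport f U q.2 p + δ * ‖p‖ := by
  have : CompactSpace U := isCompact_iff_compactSpace.1 hU
  let Φ : C(E, C(U, E)) := ContinuousMap.curry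
    ⟨fun q : E × U => f q.1 q.2, hf.comp (continuous_fst.prodMk
      (continuous_subtype_val.comp continuous_snd))⟩
  filter_upwards [hX.uniformContinuousAt_of_continuousAt Φ (fun x _ => Φ.continuous.continuousAt)
    (dist_mem_uniformity hδ)] with q hq hqX p
  refine csSup_le (hUne.image _) ?_
  rintro _ ⟨u, hu, rfl⟩
  have hdist : ‖f q.1 u - f q.2 u‖ ≤ δ := by
    rw [← dist_eq_norm]
    exact ((Φ q.1).dist_apply_le_dist ⟨u, hu⟩).trans (hq hqX).le
  calc p (f q.1 u) = p (f q.2 u) + p (f q.1 u - f q.2 u) := by rw [map_sub, add_sub_cancel]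
    _ ≤ velocitySupport f U q.2 p + δ * ‖p‖ := by
        refine add_le_add (apply_le_velocitySupport hU hf hu q.2 p) ((le_abs_self _).trans ?_)
        exact (p.le_of_opNorm_le_of_le le_rfl hdist).trans_eq (mul_comm _ _)

variable [FiniteDimensional ℝ E]

theorem mem_convexHull_of_forall_le_velocitySupport (hU : IsCompact U) (hUne : U.Nonempty)
    (hf : Continuous fun q : E × F => f q.1 q.2) {x d : E}
    (hd : ∀ p, p d ≤ velocitySupport f U x p) : d ∈ convexHull ℝ (f x '' U) := by
  by_contra hnot
  have hcompact := isCompact_convexHull_of_finiteDimensional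
    (hU.image (hf.comp (.prodMk_right x)))
  obtain ⟨p, c, hp, hc⟩ :=
    geometric_hahn_banach_closed_point (convex_convexHull ℝ _) hcompact.isClosed hnot
  refine (hd p).not_gt ((csSup_le (hUne.image _) ?_).trans_lt hc)
  rintro _ ⟨u, hu, rfl⟩
  exact (hp _ (subset_convexHull ℝ _ (mem_image_of_mem _ hu))).le

theorem isRelaxedTrajectory_of_mem_viablePaths (hU : IsCompact U) (hUne : U.Nonempty)
    (hf : Continuous fun q : E × F => f q.1 q.2) {M : ℝ≥0} {γ : C(ℝ, E)}
    (hγ : γ ∈ viablePaths (velocitySupport f U) X M) : IsRelaxedTrajectory X U f γ := by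
  refine ⟨hγ.2.1, deriv γ, fun t _ => intervalIntegrable_deriv_of_lipschitzWith hγ.1 0 t,
    fun t _ => ?_, ?_⟩
  · rw [integral_deriv_eq_sub_of_lipschitzWith hγ.1, add_sub_cancel]
  · filter_upwards [ae_restrict_of_ae hγ.1.ae_differentiableAt,
      ae_restrict_mem measurableSet_Ici] with t hdiff ht
    exact mem_convexHull_of_forall_le_velocitySupport hU hUne hf <| hγ.2.apply_le_of_hasDerivAt
      (continuous_velocitySupport hU hf) γ.continuous ht
      (mem_of_superset self_mem_nhdsWithin fun s hs => ht.trans (mem_Ioi.1 hs).le) hdiff.hasDerivAt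

end RelaxedTrajectories

section WeakDuality

theorem integrable_of_continuous_of_measure_compl_eq_zero {α : Type*} [TopologicalSpace α]
    [MeasurableSpace α] [OpensMeasurableSpace α] {μ : Measure α} [IsFiniteMeasure μ] {K : Set α}
    (hK : IsCompact K) (hμ : μ Kᶜ = 0) {φ : α → ℝ} (hφ : Continuous φ) : Integrable φ μ := by
  obtain ⟨C, hC⟩ := hK.exists_bound_of_continuousOn hφ.continuousOn
  exact .of_bound hφ.aestronglyMeasurable C (mem_of_superset (mem_ae_iff.2 hμ) hC)

variable {E F : Type*} [NormedAddCommGroup E] [NormedSpace ℝ E]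
variable [MeasurableSpace E] [MeasurableSpace F]
variable {f : E → F → E} {β : ℝ} {μ₀ : Measure E} {μ : Measure (E × F)}

/-- The discounted Liouville equation `β μ + div (f μ) = μ₀` in weak form. -/
def DiscountedLiouville (f : E → F → E) (β : ℝ) (μ₀ : Measure E) (μ : Measure (E × F)) : Prop :=
  ∀ v : E → ℝ, ContDiff ℝ 1 v →
    β * ∫ q, v q.1 ∂μ = ∫ x, v x ∂μ₀ + ∫ q, fderiv ℝ v q.1 (f q.1 q.2) ∂μ

namespace DiscountedLiouville

theorem source_eq_zero [IsFiniteMeasure μ₀] (h : DiscountedLiouville f β μ₀ μ) (hμ : μ = 0) :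
    μ₀ = 0 := by
  rw [← Measure.measure_univ_eq_zero, ← measureReal_eq_zero_iff]
  simpa [hμ] using (h (fun _ => 1) contDiff_const).symm

theorem integral_le_integral (h : DiscountedLiouville f β μ₀ μ) {v : E → ℝ} (hv : ContDiff ℝ 1 v)
    (hvμ : Integrable (fun q => v q.1) μ)
    (hvμ' : Integrable (fun q => fderiv ℝ v q.1 (f q.1 q.2)) μ) {φ : E × F → ℝ}
    (hφ : Integrable φ μ) (hle : ∀ᵐ q ∂μ, β * v q.1 - fderiv ℝ v q.1 (f q.1 q.2) ≤ φ q) :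
    ∫ x, v x ∂μ₀ ≤ ∫ q, φ q ∂μ := by
  have hmono := integral_mono_ae ((hvμ.const_mul β).sub hvμ') hφ hle
  simp only [Pi.sub_apply] at hmono
  rwa [integral_sub (hvμ.const_mul β) hvμ', integral_const_mul, h v hv, add_sub_cancel_right]
    at hmono

variable [TopologicalSpace F] [OpensMeasurableSpace F] [FiniteDimensional ℝ E] [BorelSpace E]
variable [IsFiniteMeasure μ₀] [IsFiniteMeasure μ] {X : Set E} {U : Set F} {M : ℝ≥0}

theorem neg_le_integral_add_integral (h : DiscountedLiouville f β μ₀ μ) (hX : IsCompact X)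
    (hU : IsCompact U) (hf : Continuous fun q : E × F => f q.1 q.2)
    (hμ₀ : μ₀ Xᶜ = 0) (hμ : μ (X ×ˢ U)ᶜ = 0) {v w g : E → ℝ} (hv : ContDiff ℝ 1 v)
    (hw : Continuous w) (hg : Continuous g) {ε : ℝ} (hlower : ∀ x ∈ X, -w x - ε ≤ v x)
    (hsub : ∀ x ∈ X, ∀ u ∈ U, β * v x - fderiv ℝ v x (f x u) ≤ g x + ε) :
    -(ε * (μ₀.real univ + μ.real univ)) ≤ ∫ x, w x ∂μ₀ + ∫ q, g q.1 ∂μ := by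
  have hint₀ {φ : E → ℝ} (hφ : Continuous φ) : Integrable φ μ₀ :=
    integrable_of_continuous_of_measure_compl_eq_zero hX hμ₀ hφ
  have hint {φ : E × F → ℝ} (hφ : Continuous φ) : Integrable φ μ :=
    integrable_of_continuous_of_measure_compl_eq_zero (hX.prod hU) hμ hφ
  have hwμ₀ : Integrable (fun x => -w x) μ₀ := hint₀ hw.neg
  have hgμ : Integrable (fun q : E × F => g q.1) μ := hint (hg.comp continuous_fst)
  have hupper : ∫ x, v x ∂μ₀ ≤ ∫ q, (g q.1 + ε) ∂μ :=
    h.integral_le_integral hv (hint (hv.continuous.comp continuous_fst))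
      (hint (((hv.continuous_fderiv one_ne_zero).comp continuous_fst).clm_apply hf))
      (hgμ.add (integrable_const ε))
      (mem_of_superset (mem_ae_iff.2 hμ) fun q hq => hsub q.1 hq.1 q.2 hq.2)
  have hbelow : ∫ x, (-w x - ε) ∂μ₀ ≤ ∫ x, v x ∂μ₀ :=
    integral_mono_ae (hwμ₀.sub (integrable_const ε)) (hint₀ hv.continuous)
      (mem_of_superset (mem_ae_iff.2 hμ₀) hlower)
  rw [integral_add hgμ (integrable_const ε), integral_const, smul_eq_mul] at hupper
  rw [integral_sub hwμ₀ (integrable_const ε), integral_neg, integral_const,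
    smul_eq_mul] at hbelow
  linarith

theorem integral_add_integral_nonneg (h : DiscountedLiouville f β μ₀ μ) (hβ : 0 < β)
    (hX : IsCompact X) (hU : IsCompact U) (hUne : U.Nonempty)
    (hf : Continuous fun q : E × F => f q.1 q.2) (hM : ∀ x ∈ X, ∀ u ∈ U, ‖f x u‖ ≤ M)
    (hμ₀ : μ₀ Xᶜ = 0) (hμ : μ (X ×ˢ U)ᶜ = 0) {w : E → ℝ} (hw : Continuous w) (g : E →ᵇ ℝ)
    (hcost : ∀ γ ∈ viablePaths (velocitySupport f U) X M, 0 ≤ w (γ 0) + discountedCost β g γ) :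
    0 ≤ ∫ x, w x ∂μ₀ + ∫ q, g q.1 ∂μ := by
  have hlim : Tendsto (fun ε : ℝ => -(ε * (μ₀.real univ + μ.real univ))) (𝓝[>] 0) (𝓝 0) := by
    have hcont : Continuous fun ε : ℝ => -(ε * (μ₀.real univ + μ.real univ)) := by fun_prop
    simpa using (hcont.tendsto 0).mono_left nhdsWithin_le_nhds
  refine le_of_tendsto hlim (eventually_mem_nhdsWithin.mono fun ε hε => ?_)
  obtain ⟨v, hv, hlower, hsub⟩ := exists_contDiff_subsolution hβ hX
    (continuous_velocitySupport hU hf)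
    (fun δ hδ => eventually_velocitySupport_le hX hU hUne hf hδ) hw hcost hε
  exact h.neg_le_integral_add_integral hX hU hf hμ₀ hμ hv hw g.continuous hlower
    fun x hx u hu => hsub x hx _ (hM x hx u hu) (apply_le_velocitySupport hU hf hu x)

end DiscountedLiouville

end WeakDuality

section Riesz

variable {K : Type*} [TopologicalSpace K] [CompactSpace K]

theorem exists_measure_integral_eq_of_linearPMap_nonneg [T2Space K] [MeasurableSpace K]
    [BorelSpace K] (Λ : C(K, ℝ) →ₗ.[ℝ] ℝ)
    (hΛ : ∀ φ : Λ.domain, 0 ≤ (φ : C(K, ℝ)) → 0 ≤ Λ φ) (hone : 1 ∈ Λ.domain) :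
    ∃ ν : Measure K, IsFiniteMeasure ν ∧ ∀ φ : Λ.domain, ∫ x, (φ : C(K, ℝ)) x ∂ν = Λ φ := by
  obtain ⟨ψ, hψ, hψ0⟩ := riesz_extension (PointedCone.positive ℝ C(K, ℝ)) Λ hΛ fun φ =>
    ⟨‖φ‖ • ⟨1, hone⟩, fun x => by
      simpa using neg_le_iff_add_nonneg'.1 (neg_le_of_abs_le (φ.norm_coe_le_norm x))⟩
  let Ψ : CompactlySupportedContinuousMap K ℝ →ₚ[ℝ] ℝ := .mk₀
    { toFun := fun φ => ψ (φ : C(K, ℝ))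
      map_add' := fun φ φ' => ψ.map_add _ _
      map_smul' := fun c φ => ψ.map_smul _ _ } fun φ hφ => hψ0 _ hφ
  refine ⟨RealRMK.rieszMeasure Ψ, inferInstance, fun φ => ?_⟩
  rw [← hψ]
  exact RealRMK.integral_rieszMeasure Ψ
    (CompactlySupportedContinuousMap.continuousMapEquiv (φ : C(K, ℝ)))

theorem exists_measure_integral_eq_of_nonneg [T2Space K] [MeasurableSpace K] [BorelSpace K]
    {V : Type*} [AddCommGroup V] [Module ℝ V] (L : V →ₗ[ℝ] C(K, ℝ)) (Λ : V →ₗ[ℝ] ℝ)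
    (hΛ : ∀ v, 0 ≤ L v → 0 ≤ Λ v) {e : V} (he : L e = 1) :
    ∃ ν : Measure K, IsFiniteMeasure ν ∧ ∀ v, ∫ x, L v x ∂ν = Λ v := by
  have hker : LinearMap.ker L ≤ LinearMap.ker Λ := fun v hv => by
    have hv0 : L v = 0 := hv
    refine le_antisymm ?_ (hΛ v hv0.ge)
    simpa using hΛ (-v) (by rw [map_neg, hv0, neg_zero])
  let Λ' : LinearMap.range L →ₗ[ℝ] ℝ :=
    (LinearMap.ker L).liftQ Λ hker ∘ₗ L.quotKerEquivRange.symm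
  have hΛ' (v : V) : Λ' ⟨L v, v, rfl⟩ = Λ v := by
    rw [LinearMap.comp_apply, LinearEquiv.coe_coe, L.quotKerEquivRange_symm_apply_image v ⟨v, rfl⟩,
      Submodule.mkQ_apply, Submodule.liftQ_apply]
  obtain ⟨ν, hν, hνΛ⟩ := exists_measure_integral_eq_of_linearPMap_nonneg ⟨LinearMap.range L, Λ'⟩
    (by rintro ⟨_, v, rfl⟩ hv; exact (hΛ v hv).trans_eq (hΛ' v).symm) ⟨e, he⟩
  exact ⟨ν, hν, fun v => (hνΛ ⟨L v, v, rfl⟩).trans (hΛ' v)⟩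

end Riesz

section Duality

/-- Integration of bounded continuous functions against a finite measure, as a linear map. -/
noncomputable def boundedIntegral {α : Type*} [TopologicalSpace α] [MeasurableSpace α]
    [OpensMeasurableSpace α] (ν : Measure α) [IsFiniteMeasure ν] : (α →ᵇ ℝ) →ₗ[ℝ] ℝ where
  toFun g := ∫ x, g x ∂ν
  map_add' g g' := integral_add (g.integrable ν) (g'.integrable ν)
  map_smul' c g := integral_const_mul c g

variable {E F : Type*} [NormedAddCommGroup E] {β : ℝ}

/-- The linear map sending a pair `(w, g)` of an initial cost and a running cost to the total cost
`γ ↦ w(γ(0)) + ∫₀^∞ e^{-βt} g(γ(t)) dt`, as a continuous function on a set `K` of paths. -/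
noncomputable def totalCost (hβ : 0 < β) (K : Set C(ℝ, E)) :
    (E →ᵇ ℝ) × (E →ᵇ ℝ) →ₗ[ℝ] C(K, ℝ) where
  toFun q := ⟨fun γ => q.1 (γ.1 0) + discountedCost β q.2 γ.1,
    ((q.1.continuous.comp (continuous_eval_const (0 : ℝ))).add
      (continuous_discountedCost hβ q.2)).comp continuous_subtype_val⟩
  map_add' q q' := by
    ext γ
    exact (congrArg _ (discountedCost_add hβ q.2 q'.2 γ.1.continuous)).trans
      (add_add_add_comm _ _ _ _)
  map_smul' c q := by
    ext γ
    exact (congrArg _ (discountedCost_smul c q.2 γ.1)).trans (mul_add _ _ _).symm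

theorem exists_boundedContinuousFunction_eqOn {α : Type*} [TopologicalSpace α] [T4Space α]
    {K : Set α} (hK : IsCompact K) {g : α → ℝ} (hg : Continuous g) :
    ∃ g' : α →ᵇ ℝ, EqOn g g' K := by
  have : CompactSpace K := isCompact_iff_compactSpace.1 hK
  obtain ⟨g', -, hg'⟩ := BoundedContinuousFunction.exists_norm_eq_domRestrict_eq_of_closed
    (.mkOfCompact ⟨fun x : K => g x, hg.comp continuous_subtype_val⟩) hK.isClosed
  exact ⟨g', fun x hx => (DFunLike.congr_fun hg' ⟨x, hx⟩).symm⟩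

variable [NormedSpace ℝ E] [FiniteDimensional ℝ E] [MeasurableSpace E] [BorelSpace E]
variable [MeasurableSpace C(ℝ, E)] [BorelSpace C(ℝ, E)]
variable [TopologicalSpace F] [MeasurableSpace F] [OpensMeasurableSpace F]
variable {f : E → F → E} {X : Set E} {U : Set F} {M : ℝ≥0}
variable {μ₀ : Measure E} {μ : Measure (E × F)} [IsFiniteMeasure μ₀] [IsFiniteMeasure μ]

theorem exists_measure_integral_totalCost_eq (h : DiscountedLiouville f β μ₀ μ) (hβ : 0 < β)
    (hX : IsCompact X) (hU : IsCompact U) (hUne : U.Nonempty)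
    (hf : Continuous fun q : E × F => f q.1 q.2) (hM : ∀ x ∈ X, ∀ u ∈ U, ‖f x u‖ ≤ M)
    (hμ₀ : μ₀ Xᶜ = 0) (hμ : μ (X ×ˢ U)ᶜ = 0) :
    ∃ ν : Measure (viablePaths (velocitySupport f U) X M), IsFiniteMeasure ν ∧
      ∀ w g : E →ᵇ ℝ, ∫ γ, totalCost hβ (viablePaths (velocitySupport f U) X M) (w, g) γ ∂ν =
        ∫ x, w x ∂μ₀ + ∫ q, g q.1 ∂μ := by
  have : ProperSpace E := FiniteDimensional.proper_real E
  have : CompactSpace (viablePaths (velocitySupport f U) X M) :=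
    isCompact_iff_compactSpace.1 (isCompact_viablePaths (continuous_velocitySupport hU hf) hX)
  have hmarginal (g : E →ᵇ ℝ) : boundedIntegral (μ.map Prod.fst) g = ∫ q, g q.1 ∂μ :=
    integral_map measurable_fst.aemeasurable g.continuous.aestronglyMeasurable
  obtain ⟨ν, hν, hcost⟩ := exists_measure_integral_eq_of_nonneg
    (totalCost hβ (viablePaths (velocitySupport f U) X M))
    ((boundedIntegral μ₀).coprod (boundedIntegral (μ.map Prod.fst)))
    (fun q hq => by
      rw [LinearMap.coprod_apply, hmarginal]
      exact h.integral_add_integral_nonneg hβ hX hU hUne hf hM hμ₀ hμ q.1.continuous q.2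
        fun γ hγ => hq ⟨γ, hγ⟩)
    (e := (.const E 1, 0)) (by ext γ; simp [totalCost, discountedCost])
  exact ⟨ν, hν, fun w g => (hcost (w, g)).trans (congrArg _ (hmarginal g))⟩

theorem exists_measure_viablePaths (h : DiscountedLiouville f β μ₀ μ) (hβ : 0 < β)
    (hX : IsCompact X) (hU : IsCompact U) (hUne : U.Nonempty)
    (hf : Continuous fun q : E × F => f q.1 q.2) (hM : ∀ x ∈ X, ∀ u ∈ U, ‖f x u‖ ≤ M)
    (hμ₀ : μ₀ Xᶜ = 0) (hμ : μ (X ×ˢ U)ᶜ = 0) :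
    ∃ η : Measure C(ℝ, E), IsFiniteMeasure η ∧
      η (viablePaths (velocitySupport f U) X M)ᶜ = 0 ∧ η.map (fun γ => γ 0) = μ₀ ∧
      ∀ g : E →ᵇ ℝ, ∫ γ, discountedCost β g γ ∂η = ∫ q, g q.1 ∂μ := by
  have : ProperSpace E := FiniteDimensional.proper_real E
  obtain ⟨ν, hν, hcost⟩ := exists_measure_integral_totalCost_eq h hβ hX hU hUne hf hM hμ₀ hμ
  have hval : AEMeasurable (Subtype.val : viablePaths (velocitySupport f U) X M → C(ℝ, E)) ν :=
    measurable_subtype_coe.aemeasurable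
  have heval : Continuous fun γ : C(ℝ, E) => γ 0 := continuous_eval_const 0
  refine ⟨ν.map Subtype.val, inferInstance, ?_,
    ext_of_forall_integral_eq_of_IsFiniteMeasure fun w => ?_, fun g => ?_⟩
  · rw [Measure.map_apply measurable_subtype_coe (isCompact_viablePaths
      (continuous_velocitySupport hU hf) hX).isClosed.measurableSet.compl]
    simp
  · rw [integral_map heval.measurable.aemeasurable w.continuous.aestronglyMeasurable,
      integral_map (f := fun γ : C(ℝ, E) => w (γ 0)) hval
        (w.continuous.comp heval).aestronglyMeasurable]
    simpa [totalCost, discountedCost] using hcost w 0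
  · rw [integral_map hval (continuous_discountedCost hβ g).aestronglyMeasurable]
    simpa [totalCost] using hcost 0 g

theorem liouville_superposition_general (hX : IsCompact X) (hU : IsCompact U)
    (hf : Continuous fun q : E × F => f q.1 q.2) (hβ : 0 < β) (hμ₀ : μ₀ Xᶜ = 0)
    (hμ : μ (X ×ˢ U)ᶜ = 0) (h : DiscountedLiouville f β μ₀ μ) :
    ∃ η : Measure C(ℝ, E), IsFiniteMeasure η ∧ η {γ | ¬ IsRelaxedTrajectory X U f γ} = 0 ∧
      η.map (fun γ => γ 0) = μ₀ ∧
      ∀ g : E → ℝ, Continuous g → ∫ q, g q.1 ∂μ = ∫ γ, discountedCost β g γ ∂η := by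
  obtain rfl | hUne := U.eq_empty_or_nonempty
  · obtain rfl : μ = 0 := by simpa using hμ
    obtain rfl := h.source_eq_zero rfl
    exact ⟨0, inferInstance, by simp, by simp, by simp⟩
  obtain ⟨M, hM⟩ := (hX.prod hU).exists_bound_of_continuousOn hf.continuousOn
  obtain ⟨η, hη, hηviable, hη₀, hηcost⟩ := exists_measure_viablePaths (M := M.toNNReal) h hβ hX hU
    hUne hf (fun x hx u hu => (hM (x, u) ⟨hx, hu⟩).trans M.le_coe_toNNReal) hμ₀ hμ
  refine ⟨η, hη, measure_mono_null (fun γ hγ hviable => hγ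
    (isRelaxedTrajectory_of_mem_viablePaths hU hUne hf hviable)) hηviable, hη₀, fun g hg => ?_⟩
  obtain ⟨g', hg'⟩ := exists_boundedContinuousFunction_eqOn hX hg
  calc ∫ q, g q.1 ∂μ = ∫ q, g' q.1 ∂μ :=
        integral_congr_ae (mem_of_superset (mem_ae_iff.2 hμ) fun q hq => hg' hq.1)
    _ = ∫ γ, discountedCost β g' γ ∂η := (hηcost g').symm
    _ = ∫ γ, discountedCost β g γ ∂η :=
        integral_congr_ae <| mem_of_superset (mem_ae_iff.2 hηviable) fun γ hγ =>
          setIntegral_congr_fun measurableSet_Ici fun t ht =>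
            congrArg _ (hg' (hγ.2.1 t ht)).symm

end Duality

end Superposition

/-- Superposition: any pair `(μ₀, μ)` satisfying the continuous-time discounted Liouville
equation is generated by a measure `η` on the space of continuous paths concentrated on
admissible trajectories, with `γ ↦ γ(0)` pushing `η` forward to `μ₀` and with the
`x`-marginal of `μ` equal to the `x`-marginal of the discounted occupation measure
of the family of trajectories distributed according to `η`. -/
theorem liouville_superposition {n m : ℕ}
    (X : Set (EuclideanSpace ℝ (Fin n))) (U : Set (EuclideanSpace ℝ (Fin m)))
    (hX : IsCompact X) (hU : IsCompact U)
    (f : EuclideanSpace ℝ (Fin n) → EuclideanSpace ℝ (Fin m) → EuclideanSpace ℝ (Fin n))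
    (hf : Continuous fun p : EuclideanSpace ℝ (Fin n) × EuclideanSpace ℝ (Fin m) => f p.1 p.2)
    (β : ℝ) (hβ : 0 < β)
    (μ₀ : Measure (EuclideanSpace ℝ (Fin n)))
    (μ : Measure (EuclideanSpace ℝ (Fin n) × EuclideanSpace ℝ (Fin m)))
    [IsFiniteMeasure μ₀] [IsFiniteMeasure μ]
    (hsupp₀ : μ₀ Xᶜ = 0) (hsupp : μ (X ×ˢ U)ᶜ = 0)
    (hLiouville : LiouvilleC f β μ₀ μ) :
    ∃ η : Measure C(ℝ, EuclideanSpace ℝ (Fin n)),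
      IsFiniteMeasure η ∧
      η {γ | ¬ IsAdmissible X U f (fun t => γ t)} = 0 ∧
      η.map (fun γ => γ 0) = μ₀ ∧
      ∀ g : EuclideanSpace ℝ (Fin n) → ℝ, Continuous g →
        ∫ p, g p.1 ∂μ
          = ∫ γ, (∫ t in Set.Ici (0:ℝ), Real.exp (-β * t) * g (γ t)) ∂η :=
  have : BorelSpace C(ℝ, EuclideanSpace ℝ (Fin n)) := ⟨rfl⟩
  liouville_superposition_general hX hU hf hβ hsupp₀ hsupp hLiouville
end
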